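/- arXiv:2206.06218 — 3 statements merged into one kernel-verified Lean document; each statement's English description precedes it below -/
import Mathlib

section
/- Let n and s be integers with s ≥ 2 and n ≥ 2s + 2. Let F be a 3-graph with vertex set [n]. If F has property U(s, 2s+1), then |F| ≤ max{ C(n−1, 2), (n−s−1)·C(s+1, 2) + C(s+1, 3), C(2s+1, 3) }. -/
/-!
Shifting (replacing a vertex `j` by a smaller vertex `i`) preserves the number of edges and property
`U(s, q)`, so the family may be assumed shifted. If `{2, 3, 4}` is not an edge, every edge contains
`1` and the family is a star, of size at most `C(n-1, 2)`. Otherwise `nonstar_bound` shows that the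
maximum of the other two quantities, `g₂(n, s)` and `g₃(s)`, is an upper bound.

That bound is proved by induction on `n`, starting from the trivial case `n = 2s + 1`. Suppose some
edge contains the last vertex `n`; by shiftedness `{1, 2, n}` is an edge. Then

* the edges avoiding `1` form a family with property `U(s-1, 2s-1)` on `n - 1` vertices, since any
  `s - 1` of them can be complemented by an edge containing `1` and a vertex not yet covered
  (`HasU.del_first`);
* `{2, 3, 4}` together with `s - 1` nested edges `{1, 5+i, 2s+2-i}` would cover `2s + 2` vertices, so
  one of these edges is missing, which bounds the number of edges through `1`. If even `{2, 3, n}` is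
  an edge, the same holds with `{2, 3, 2s+2}` and the edges `{1, 4+i, 2s+1-i}`.

The missing edge also bounds the number of edges through `n` by `s + 1`, respectively `C(s+1, 2)`.
When `g₂(n-1, s) ≥ g₃(s)`, deleting the vertex `n` and using this bound suffices. In the remaining
range, where `n ≤ 10s/3`, one adds the bounds for the edges through `1` and for those avoiding `1`:
the latter family is either a star with centre `2`, whose size is controlled by the same missing edge,
or is bounded by induction. For `s = 2` the remaining range is only `n = 6`, where at most one edge of
each complementary pair is present. The final inequalities are `arithA` and `arithB`.
-/

open Finset

/-- `F₁ ≺ F₂`: same size, and the `i`-th smallest element of `F₁` is at most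
the `i`-th smallest element of `F₂`. -/
def PrecS (A B : Finset ℕ) : Prop :=
  A.card = B.card ∧
    ∀ i, i < A.card → (A.sort (· ≤ ·)).getD i 0 ≤ (B.sort (· ≤ ·)).getD i 0

/-- A family of subsets of `[n] = {1,…,n}` is stable (shifted). -/
def IsStable (n : ℕ) (F : Finset (Finset ℕ)) : Prop :=
  ∀ A B : Finset ℕ, A ⊆ Finset.Icc 1 n → B ∈ F → PrecS A B → A ∈ F

/-- Property `U(s, q)`: any `s` edges (repetitions allowed) have union of size at most `q`. -/
def HasU (F : Finset (Finset ℕ)) (s q : ℕ) : Prop :=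
  ∀ f : Fin s → Finset ℕ, (∀ i, f i ∈ F) → (Finset.univ.biUnion f).card ≤ q

/-- Matching number: the maximum size of a set of pairwise disjoint edges of `F`. -/
def matchNum (F : Finset (Finset ℕ)) : ℕ :=
  (F.powerset.filter fun M => ∀ a ∈ M, ∀ b ∈ M, a ≠ b → Disjoint a b).sup Finset.card

/-- Shadow of a 3-uniform family: all 2-element subsets of its edges. -/
def shadow2 (F : Finset (Finset ℕ)) : Finset (Finset ℕ) :=
  F.biUnion fun f => f.powersetCard 2

/-- Deletion of the first `i` vertices: edges disjoint from `[i] = {1,…,i}`. -/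
def del (F : Finset (Finset ℕ)) (i : ℕ) : Finset (Finset ℕ) :=
  F.filter fun e => Disjoint e (Finset.Icc 1 i)


/-! ### Numerical estimates -/

/-- Six times `(n-s-1) C(s+1, 2) + C(s+1, 3)`, as a polynomial over `ℤ` to avoid truncated
subtraction and division. -/
def G2 (n s : ℤ) : ℤ := 3 * (n - s - 1) * (s + 1) * s + (s + 1) * s * (s - 1)
/-- Six times `C(2s+1, 3)`, as a polynomial over `ℤ`. -/
def G3 (s : ℤ) : ℤ := (2 * s + 1) * (2 * s) * (2 * s - 1)

/-- While the clique on `2s + 1` vertices beats the other family on `n - 1` vertices,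
`n ≤ 10s/3`. -/
theorem range_of_lt {n s : ℤ} (hs : 3 ≤ s) (h : G2 (n - 1) s < G3 s) : 3 * n ≤ 10 * s := by
  unfold G2 G3 at h
  by_contra! hc
  have : 0 ≤ (3 * n - 10 * s - 1) * ((s + 1) * s) := by
    apply mul_nonneg (by linarith); positivity
  nlinarith [mul_nonneg (show (0:ℤ) ≤ s - 3 by linarith) (show (0:ℤ) ≤ s by linarith)]

/-- A quadratic with nonnegative leading coefficient on `[0, m]` is at most its value at an end. -/
theorem quad_le_ends {c d m j : ℤ} (h0 : 0 ≤ j) (h1 : j ≤ m) (hd : 0 ≤ d) :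
    d * j ^ 2 + c * j ≤ 0 ∨ d * j ^ 2 + c * j ≤ d * m ^ 2 + c * m := by
  by_cases h : c + d * m ≤ 0
  · left
    have := mul_nonneg h0 (mul_nonneg hd (sub_nonneg.2 h1))
    nlinarith [mul_nonneg h0 (sub_nonneg.2 h)]
  · right
    push Not at h
    nlinarith [mul_nonneg (sub_nonneg.2 h1) (mul_nonneg hd h0), mul_nonneg (sub_nonneg.2 h1) h.le]

/-- The numerical estimate when `{2, 3, n}` is an edge and `{1, 4+j, 2s+1-j}` is not: `a` counts the
edges through `1`, and `b` those avoiding `1`, which form a star or are bounded by induction on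
`n - 1` vertices. Both star counts are convex in `j`, so only `j = 0` and `j = s - 2` matter. -/
theorem arithB {n s j a b : ℤ} (hs : 3 ≤ s) (hn : 2 * s + 2 ≤ n) (h : G2 (n - 1) s < G3 s)
    (h0 : 0 ≤ j) (h1 : j ≤ s - 2)
    (ha : 2 * a ≤ (2 * s - 1 - j) * (2 * s - 2 - j) + 2 * ((2 + j) * (n - 2 * s + j)))
    (hb : 2 * b ≤ (2 * s - 2 - j) * (2 * s - 3 - j) + 2 * ((1 + j) * (n - 2 * s + j)) ∨
      6 * b ≤ G2 (n - 1) (s - 1) ∨ 6 * b ≤ G3 (s - 1)) :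
    6 * (a + b) ≤ G2 n s ∨ 6 * (a + b) ≤ G3 s := by
  have hr := range_of_lt hs h
  have hsq : 0 ≤ (s - 3) * (s - 3) := mul_self_nonneg _
  have hsq' : 0 ≤ (s - 3) * ((s - 3) * (s - 3)) := mul_nonneg (by linarith) hsq
  have hns : 0 ≤ (10 * s - 3 * n) * (s - 3) := mul_nonneg (by linarith) (by linarith)
  have hns' : 0 ≤ (n - 2 * s - 2) * (s - 3) := mul_nonneg (by linarith) (by linarith)
  rcases hb with hb | hb | hb
  · by_cases h6 : s ≤ 6
    · unfold G2 G3 at *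
      interval_cases s <;> interval_cases j <;> norm_num at * <;> omega
    · right
      unfold G2 G3 at *
      rcases quad_le_ends (c := 4 * n - 16 * s + 14) (d := 6) h0 h1 (by norm_num) with hj | hj <;>
      nlinarith
  · rcases quad_le_ends (c := 2 * n - 8 * s + 7) (d := 3) h0 h1 (by norm_num) with hj | hj
    · by_cases hc : 5 * s - 1 ≤ 2 * n
      · left
        unfold G2 at *
        nlinarith [mul_nonneg (sub_nonneg.2 hc) (show (0:ℤ) ≤ s - 2 by linarith)]
      · right
        have : 0 ≤ (5 * s - 1 - 2 * n) * (s * (s - 1)) :=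
          mul_nonneg (by linarith) (mul_nonneg (by linarith) (by linarith))
        unfold G2 G3 at *
        nlinarith
    · left
      unfold G2 at *
      nlinarith
  · right
    unfold G3 at *
    rcases quad_le_ends (c := 2 * n - 8 * s + 7) (d := 3) h0 h1 (by norm_num) with hj | hj
    · nlinarith
    · nlinarith

/-- The numerical estimate when `{2, 3, n}` is not an edge and neither is `{1, 5+j, 2s+2-j}`: `a` counts
the edges through `1`, and `b` those avoiding `1`, which form a star or are bounded by induction on
`n - 2` vertices, as they also avoid `n`. The hypothesis `hy` is needed only for small `s`. -/
theorem arithA {n s j a b : ℤ} (hs : 3 ≤ s) (hn : 2 * s + 2 ≤ n) (h : G2 (n - 1) s < G3 s)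
    (hy : G2 n s < G3 s + 6 * (s + 1))
    (h0 : 0 ≤ j) (h1 : j ≤ s - 2)
    (ha : 2 * a ≤ (2 * s - j) * (2 * s - 1 - j) + 2 * ((3 + j) * (n - 2 * s - 1 + j)))
    (hb : 2 * b ≤ (2 * s - 1 - j) * (2 * s - 2 - j) + 2 * ((2 + j) * (n - 2 * s - 2 + j)) ∨
      6 * b ≤ G2 (n - 2) (s - 1) ∨ 6 * b ≤ G3 (s - 1)) :
    6 * (a + b) ≤ G2 n s ∨ 6 * (a + b) ≤ G3 s := by
  have hr := range_of_lt hs h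
  by_cases h6 : s ≤ 6
  · unfold G2 G3 at *
    rcases hb with hb | hb | hb <;>
    interval_cases s <;> interval_cases j <;> norm_num at * <;> omega
  have hsq : 0 ≤ (s - 3) * (s - 3) := mul_self_nonneg _
  have hsq' : 0 ≤ (s - 3) * ((s - 3) * (s - 3)) := mul_nonneg (by linarith) hsq
  have hns : 0 ≤ (10 * s - 3 * n) * (s - 3) := mul_nonneg (by linarith) (by linarith)
  have hns' : 0 ≤ (n - 2 * s - 2) * (s - 3) := mul_nonneg (by linarith) (by linarith)
  rcases hb with hb | hb | hb
  · right
    unfold G3 at *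
    rcases quad_le_ends (c := 4 * n - 16 * s + 8) (d := 6) h0 h1 (by norm_num) with hj | hj <;>
    nlinarith
  · rcases quad_le_ends (c := 2 * n - 8 * s + 5) (d := 3) h0 h1 (by norm_num) with hj | hj
    · by_cases hc : 5 * s + 1 ≤ 2 * n
      · left
        unfold G2 at *
        nlinarith [mul_nonneg (sub_nonneg.2 hc) (show (0:ℤ) ≤ s - 2 by linarith)]
      · right
        have : 0 ≤ (5 * s + 1 - 2 * n) * (s * (s - 1)) :=
          mul_nonneg (by linarith) (mul_nonneg (by linarith) (by linarith))
        unfold G2 G3 at *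
        nlinarith
    · left
      unfold G2 at *
      nlinarith
  · right
    unfold G3 at *
    rcases quad_le_ends (c := 2 * n - 8 * s + 5) (d := 3) h0 h1 (by norm_num) with hj | hj
    · nlinarith
    · nlinarith

theorem two_mul_choose_two (m : ℕ) : (2 * (m.choose 2 : ℕ) : ℤ) = m * (m - 1) := by
  rw [Nat.choose_two_right]
  have h2 : 2 * (m * (m - 1) / 2) = m * (m - 1) :=
    Nat.mul_div_cancel' (Nat.even_mul_pred_self m).two_dvd
  rcases m with _ | m
  · simp
  · zify at h2
    simpa using h2

theorem six_mul_choose_three (m : ℕ) :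
    (6 * (m.choose 3 : ℕ) : ℤ) = m * (m - 1) * (m - 2) := by
  induction m with
  | zero => simp
  | succ m ih =>
    rw [Nat.choose_succ_succ' m 2]
    have := two_mul_choose_two m
    push_cast at *
    linarith

theorem six_G2 {n s : ℕ} (h : s + 1 ≤ n) :
    (6 * ((n - s - 1) * Nat.choose (s + 1) 2 + Nat.choose (s + 1) 3 : ℕ) : ℤ) = G2 n s := by
  have h2 := two_mul_choose_two (s + 1)
  have h3 := six_mul_choose_three (s + 1)
  obtain ⟨m, rfl⟩ := Nat.exists_eq_add_of_le h
  have : s + 1 + m - s - 1 = m := by omega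
  rw [this]
  unfold G2
  push_cast at *
  linear_combination 3 * m * h2 + h3

theorem six_G3 (s : ℕ) : (6 * (Nat.choose (2 * s + 1) 3 : ℕ) : ℤ) = G3 s := by
  have h3 := six_mul_choose_three (2 * s + 1)
  unfold G3
  push_cast at *
  linear_combination h3

/-! ### Shifted 3-graphs and property `U(s, 2s+1)` -/

/-- `F` is a 3-graph on the vertices `k + 1, …, m`. The offset `k` allows the first vertex to be
deleted without relabelling. -/
def Unif (k m : ℕ) (F : Finset (Finset ℕ)) : Prop :=
  ∀ e ∈ F, e ⊆ Finset.Ioc k m ∧ e.card = 3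

/-- In any edge, a vertex may be replaced by a smaller vertex above `k` outside the edge. -/
def Shifted (k : ℕ) (F : Finset (Finset ℕ)) : Prop :=
  ∀ e ∈ F, ∀ i j, k < i → i < j → j ∈ e → i ∉ e → insert i (e.erase j) ∈ F

theorem Unif.exists_eq {k m : ℕ} {F : Finset (Finset ℕ)} (hF : Unif k m F) {e : Finset ℕ}
    (he : e ∈ F) : ∃ a b c, k < a ∧ a < b ∧ b < c ∧ c ≤ m ∧ e = {a, b, c} := by
  obtain ⟨h1, h2⟩ := hF e he
  have key : ∀ x ∈ e, k < x ∧ x ≤ m := fun x hx => Finset.mem_Ioc.1 (h1 hx)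
  obtain ⟨x, y, z, hxy, hxz, hyz, rfl⟩ := Finset.card_eq_three.1 h2
  have hx := key x (by simp)
  have hy := key y (by simp)
  have hz := key z (by simp)
  rcases lt_or_gt_of_ne hxy with h | h <;> rcases lt_or_gt_of_ne hxz with h' | h' <;>
    rcases lt_or_gt_of_ne hyz with h'' | h''
  · exact ⟨x, y, z, hx.1, h, h'', hz.2, rfl⟩
  · exact ⟨x, z, y, hx.1, h', h'', hy.2, by ext; simp; tauto⟩
  · omega
  · exact ⟨z, x, y, hz.1, h', h, hy.2, by ext; simp; tauto⟩
  · exact ⟨y, x, z, hy.1, h, h', hz.2, by ext; simp; tauto⟩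
  · omega
  · exact ⟨y, z, x, hy.1, h'', h', hx.2, by ext; simp; tauto⟩
  · exact ⟨z, y, x, hz.1, h'', h, hx.2, by ext; simp; tauto⟩

theorem Shifted.mem_of_le {k : ℕ} {F : Finset (Finset ℕ)} (hS : Shifted k F) {a b c a' b' c' : ℕ}
    (he : ({a, b, c} : Finset ℕ) ∈ F) (hab : a < b) (hbc : b < c) (hk : k < a')
    (hab' : a' < b') (hbc' : b' < c') (ha : a' ≤ a) (hb : b' ≤ b) (hc : c' ≤ c) :
    ({a', b', c'} : Finset ℕ) ∈ F := by
  have h1 : ({a', b, c} : Finset ℕ) ∈ F := by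
    rcases ha.eq_or_lt with rfl | h
    · exact he
    · convert hS _ he a' a hk h (by simp) (by simp; omega) using 1
      ext; simp; omega
  have h2 : ({a', b', c} : Finset ℕ) ∈ F := by
    rcases hb.eq_or_lt with rfl | h
    · exact h1
    · convert hS _ h1 b' b (by omega) h (by simp) (by simp; omega) using 1
      ext; simp; omega
  rcases hc.eq_or_lt with rfl | h
  · exact h2
  · convert hS _ h2 c' c (by omega) h (by simp) (by simp; omega) using 1
    ext; simp; omega

/-- A star with centre `r` whose link has no edge `a < b` with `U ≤ a` and `V ≤ b`: the link consists
of pairs below `V` and pairs with one end below `U` and the other at least `V`. -/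
theorem star_card_le {r m U V : ℕ} {F : Finset (Finset ℕ)}
    (hF : ∀ e ∈ F, ∃ a b, r < a ∧ a < b ∧ b ≤ m ∧ (a < U ∨ b < V) ∧ e = {r, a, b}) :
    F.card ≤ (V - 1 - r).choose 2 + (U - 1 - r) * (m + 1 - V) := by
  classical
  have hsub : F ⊆ (Finset.powersetCard 2 (Finset.Ioo r V)).image (insert r) ∪
      (Finset.Ioo r U ×ˢ Finset.Ico V (m + 1)).image (fun p => {r, p.1, p.2}) := by
    intro e he
    obtain ⟨a, b, hra, hab, hbm, huv, rfl⟩ := hF e he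
    rw [Finset.mem_union, Finset.mem_image, Finset.mem_image]
    by_cases hb : b < V
    · left
      refine ⟨{a, b}, ?_, rfl⟩
      rw [Finset.mem_powersetCard]
      refine ⟨?_, Finset.card_pair hab.ne⟩
      intro x hx
      simp at hx ⊢
      omega
    · right
      exact ⟨(a, b), by simp; omega, rfl⟩
  refine (Finset.card_le_card hsub).trans ((Finset.card_union_le _ _).trans ?_)
  refine add_le_add (Finset.card_image_le.trans ?_) (Finset.card_image_le.trans ?_)
  · rw [Finset.card_powersetCard, Nat.card_Ioo]
    exact Nat.choose_le_choose _ (by omega)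
  · rw [Finset.card_product, Nat.card_Ioo, Nat.card_Ico]
    exact Nat.mul_le_mul (by omega) (by omega)

theorem HasU.mono {F G : Finset (Finset ℕ)} {s q : ℕ} (h : HasU F s q) (hG : G ⊆ F) :
    HasU G s q := fun f hf => h f fun i => hG (hf i)

theorem HasU.not_cover {F : Finset (Finset ℕ)} {s k : ℕ} (hU : HasU F s (2 * s + 1))
    (hs : 1 ≤ s) {t : Finset ℕ} (ht : t ∈ F) (g : ℕ → Finset ℕ) (hg : ∀ i < s - 1, g i ∈ F)
    (hc : ∀ x, k < x → x ≤ k + (2 * s + 2) → x ∈ t ∨ ∃ i < s - 1, x ∈ g i) : False := by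
  have h := hU (fun i => if i.1 < s - 1 then g i.1 else t) (by
    intro i
    split_ifs with hi
    · exact hg _ hi
    · exact ht)
  have hsub : Finset.Ioc k (k + (2 * s + 2)) ⊆ Finset.univ.biUnion
      (fun i : Fin s => if i.1 < s - 1 then g i.1 else t) := by
    intro x hx
    rw [Finset.mem_Ioc] at hx
    rw [Finset.mem_biUnion]
    rcases hc x hx.1 hx.2 with h' | ⟨i, hi, h'⟩
    · exact ⟨⟨s - 1, by omega⟩, Finset.mem_univ _, by simpa using h'⟩
    · exact ⟨⟨i, by omega⟩, Finset.mem_univ _, by simpa [hi] using h'⟩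
  have := (Finset.card_le_card hsub).trans h
  rw [Nat.card_Ioc] at this
  omega

/-- `{k+2, k+3, k+4}` and the nested edges `{k+1, k+5+i, k+2s+2-i}` would cover the first `2s + 2`
vertices. -/
theorem HasU.exists_notMemA {F : Finset (Finset ℕ)} {s k : ℕ} (hU : HasU F s (2 * s + 1))
    (hs : 2 ≤ s) (ht : {k + 2, k + 3, k + 4} ∈ F) :
    ∃ i ≤ s - 2, {k + 1, k + 5 + i, k + 2 * s + 2 - i} ∉ F := by
  by_contra! hcon
  refine hU.not_cover (k := k) (by omega) ht (fun i => {k + 1, k + 5 + i, k + 2 * s + 2 - i})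
    (fun i hi => hcon i (by omega)) ?_
  intro x h1 h2
  simp only [Finset.mem_insert, Finset.mem_singleton]
  by_cases hx1 : x = k + 1
  · exact Or.inr ⟨0, by omega, by omega⟩
  by_cases hx2 : x ≤ k + 4
  · left; omega
  right
  by_cases hx3 : x ≤ k + s + 3
  · exact ⟨x - k - 5, by omega, by omega⟩
  · exact ⟨k + 2 * s + 2 - x, by omega, by omega⟩

/-- `{k+2, k+3, k+2s+2}` and the nested edges `{k+1, k+4+i, k+2s+1-i}` would cover the first `2s + 2`
vertices. -/
theorem HasU.exists_notMemB {F : Finset (Finset ℕ)} {s k : ℕ} (hU : HasU F s (2 * s + 1))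
    (hs : 2 ≤ s) (ht : {k + 2, k + 3, k + (2 * s + 2)} ∈ F) :
    ∃ i ≤ s - 2, {k + 1, k + 4 + i, k + 2 * s + 1 - i} ∉ F := by
  by_contra! hcon
  refine hU.not_cover (k := k) (by omega) ht (fun i => {k + 1, k + 4 + i, k + 2 * s + 1 - i})
    (fun i hi => hcon i (by omega)) ?_
  intro x h1 h2
  simp only [Finset.mem_insert, Finset.mem_singleton]
  by_cases hx1 : x = k + 1
  · exact Or.inr ⟨0, by omega, by omega⟩
  by_cases hx2 : x ≤ k + 3 ∨ x = k + (2 * s + 2)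
  · left; omega
  right
  by_cases hx3 : x ≤ k + s + 2
  · exact ⟨x - k - 4, by omega, by omega⟩
  · exact ⟨k + 2 * s + 1 - x, by omega, by omega⟩

/-- Any edges avoiding the first vertex can be joined by an edge through the first vertex and an
uncovered one, so deleting the first vertex lowers both `s` and the size of a union. -/
theorem HasU.del_first {F : Finset (Finset ℕ)} {s k n : ℕ} (hU : HasU F (s + 1) (2 * (s + 1) + 1))
    (hF : Unif k (k + n) F) (hS : Shifted k F) (hn : 2 * (s + 1) + 2 ≤ n)
    (he : {k + 1, k + 2, k + n} ∈ F) :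
    HasU (F.filter (fun e => k + 1 ∉ e)) s (2 * s + 1) := by
  intro f hf
  by_contra! hcon
  set W := Finset.univ.biUnion f with hW
  have hWs : W ⊆ Finset.Ioc (k + 1) (k + n) := by
    intro x hx
    obtain ⟨i, -, hi⟩ := Finset.mem_biUnion.1 hx
    obtain ⟨h1, h2⟩ := Finset.mem_filter.1 (hf i)
    have := Finset.mem_Ioc.1 ((hF _ h1).1 hi)
    have : x ≠ k + 1 := by rintro rfl; exact h2 hi
    rw [Finset.mem_Ioc]; omega
  have edge : ∀ j, k + 1 < j → j ≤ k + n → ∃ e ∈ F, k + 1 ∈ e ∧ j ∈ e := by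
    intro j h1 h2
    by_cases hj : j = k + 2
    · exact ⟨_, he, by simp, by simp [hj]⟩
    · exact ⟨{k + 1, k + 2, j}, hS.mem_of_le he (by omega) (by omega) (by omega) (by omega)
        (by omega) le_rfl le_rfl h2, by simp, by simp⟩
  have hall : ∀ e ∈ F, (e ∪ W).card ≤ 2 * (s + 1) + 1 := by
    intro e he'
    have := hU (Fin.cons e f) (by
      intro i
      refine Fin.cases ?_ (fun i => ?_) i
      · simpa using he'
      · simpa using (Finset.mem_filter.1 (hf i)).1)
    refine le_trans (Finset.card_le_card ?_) this
    intro x hx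
    rw [Finset.mem_biUnion]
    rcases Finset.mem_union.1 hx with h | h
    · exact ⟨0, Finset.mem_univ _, by simpa using h⟩
    · obtain ⟨i, -, hi⟩ := Finset.mem_biUnion.1 h
      exact ⟨i.succ, Finset.mem_univ _, by simpa using hi⟩
  have hk : k + 1 ∉ W := fun h => by simpa using hWs h
  by_cases hWall : W = Finset.Ioc (k + 1) (k + n)
  · have h1 := hall _ he
    have h2 : insert (k + 1) W ⊆ {k + 1, k + 2, k + n} ∪ W := by
      intro x hx
      rcases Finset.mem_insert.1 hx with rfl | h
      · simp
      · exact Finset.mem_union_right _ h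
    have h3 := (Finset.card_le_card h2).trans h1
    rw [Finset.card_insert_of_notMem hk, hWall, Nat.card_Ioc] at h3
    omega
  · obtain ⟨j, hj, hjW⟩ := Finset.exists_of_ssubset (hWs.ssubset_of_ne hWall)
    obtain ⟨hj1, hj2⟩ := Finset.mem_Ioc.1 hj
    obtain ⟨e, heF, hke, hje⟩ := edge j hj1 hj2
    have h1 := hall e heF
    have h2 : insert (k + 1) (insert j W) ⊆ e ∪ W := by
      intro x hx
      rcases Finset.mem_insert.1 hx with rfl | h
      · exact Finset.mem_union_left _ hke
      rcases Finset.mem_insert.1 h with rfl | h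
      · exact Finset.mem_union_left _ hje
      · exact Finset.mem_union_right _ h
    have h3 := (Finset.card_le_card h2).trans h1
    rw [Finset.card_insert_of_notMem (by simp [hk]; omega), Finset.card_insert_of_notMem hjW] at h3
    omega

theorem Unif.filter_first {F : Finset (Finset ℕ)} {k m : ℕ} (hF : Unif k m F) :
    Unif (k + 1) m (F.filter (fun e => k + 1 ∉ e)) := by
  intro e he
  obtain ⟨h1, h2⟩ := Finset.mem_filter.1 he
  refine ⟨fun x hx => ?_, (hF e h1).2⟩
  have := Finset.mem_Ioc.1 ((hF e h1).1 hx)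
  have : x ≠ k + 1 := by rintro rfl; exact h2 hx
  rw [Finset.mem_Ioc]; omega

theorem Shifted.filter_first {F : Finset (Finset ℕ)} {k : ℕ} (hS : Shifted k F) :
    Shifted (k + 1) (F.filter (fun e => k + 1 ∉ e)) := by
  intro e he i j hi hij hj hie
  obtain ⟨h1, h2⟩ := Finset.mem_filter.1 he
  refine Finset.mem_filter.2 ⟨hS e h1 i j (by omega) hij hj hie, ?_⟩
  simp [h2]; omega

theorem Unif.filter_last {F : Finset (Finset ℕ)} {k m : ℕ} (hF : Unif k (m + 1) F) :
    Unif k m (F.filter (fun e => m + 1 ∉ e)) := by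
  intro e he
  obtain ⟨h1, h2⟩ := Finset.mem_filter.1 he
  refine ⟨fun x hx => ?_, (hF e h1).2⟩
  have := Finset.mem_Ioc.1 ((hF e h1).1 hx)
  have : x ≠ m + 1 := by rintro rfl; exact h2 hx
  rw [Finset.mem_Ioc]; omega

theorem Shifted.filter_last {F : Finset (Finset ℕ)} {k m : ℕ} (hF : Unif k (m + 1) F)
    (hS : Shifted k F) : Shifted k (F.filter (fun e => m + 1 ∉ e)) := by
  intro e he i j hi hij hj hie
  obtain ⟨h1, h2⟩ := Finset.mem_filter.1 he
  refine Finset.mem_filter.2 ⟨hS e h1 i j (by omega) hij hj hie, ?_⟩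
  have := Finset.mem_Ioc.1 ((hF e h1).1 hj)
  simp [h2]; omega

/-! ### Bound for shifted families that are not stars -/

/-- An intersecting family of triples on six vertices contains at most one of each pair of
complementary triples. -/
theorem card_le_ten {k : ℕ} {F : Finset (Finset ℕ)} (hF : Unif k (k + 6) F) (hU : HasU F 2 5) :
    F.card ≤ 10 := by
  classical
  have hmem : ∀ e ∈ F, e ⊆ Finset.Ioc k (k + 6) := fun e he => (hF e he).1
  have hinj : Set.InjOn (fun e => Finset.Ioc k (k + 6) \ e) (F : Set (Finset ℕ)) := by
    intro a ha b hb hab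
    dsimp only at hab
    rw [← Finset.sdiff_sdiff_eq_self (hmem a ha), hab, Finset.sdiff_sdiff_eq_self (hmem b hb)]
  have hdisj : Disjoint F (F.image (fun e => Finset.Ioc k (k + 6) \ e)) := by
    rw [Finset.disjoint_left]
    intro e he he'
    obtain ⟨e', h1, rfl⟩ := Finset.mem_image.1 he'
    have := hU ![e', Finset.Ioc k (k + 6) \ e'] (by
      intro i; fin_cases i
      · exact h1
      · exact he)
    have h2 : Finset.Ioc k (k + 6) ⊆
        Finset.univ.biUnion ![e', Finset.Ioc k (k + 6) \ e'] := by
      intro x hx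
      rw [Finset.mem_biUnion]
      by_cases h : x ∈ e'
      · exact ⟨0, Finset.mem_univ _, h⟩
      · exact ⟨1, Finset.mem_univ _, Finset.mem_sdiff.2 ⟨hx, h⟩⟩
    have := (Finset.card_le_card h2).trans this
    simp at this
  have hsub : F ∪ F.image (fun e => Finset.Ioc k (k + 6) \ e) ⊆
      Finset.powersetCard 3 (Finset.Ioc k (k + 6)) := by
    intro e he
    rw [Finset.mem_powersetCard]
    rcases Finset.mem_union.1 he with h | h
    · exact hF e h
    · obtain ⟨e', h1, rfl⟩ := Finset.mem_image.1 h
      refine ⟨Finset.sdiff_subset, ?_⟩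
      rw [Finset.card_sdiff_of_subset (hmem e' h1), (hF e' h1).2]
      simp
  have h := Finset.card_le_card hsub
  rw [Finset.card_union_of_disjoint hdisj, Finset.card_image_of_injOn hinj,
    Finset.card_powersetCard, Nat.card_Ioc, Nat.add_sub_cancel_left,
    show Nat.choose 6 3 = 20 from rfl] at h
  omega

theorem Unif.card_le {k n : ℕ} {F : Finset (Finset ℕ)} (hF : Unif k (k + n) F) :
    F.card ≤ n.choose 3 := by
  have : F ⊆ Finset.powersetCard 3 (Finset.Ioc k (k + n)) := fun e he =>
    Finset.mem_powersetCard.2 (hF e he)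
  simpa using Finset.card_le_card this

theorem cast_star (p q r : ℕ) (A : ℕ) (h : A ≤ p.choose 2 + q * r) :
    2 * (A : ℤ) ≤ p * (p - 1) + 2 * (q * r) := by
  have := two_mul_choose_two p
  zify at h
  linarith

set_option maxHeartbeats 1600000 in
/-- A shifted family with property `U(s, 2s+1)` that is not a star centred at its first vertex has at
most as many edges as the larger of the two non-star examples. -/
theorem nonstar_bound (n : ℕ) : ∀ (s k : ℕ) (F : Finset (Finset ℕ)), 2 ≤ s → 2 * s + 1 ≤ n →
    Unif k (k + n) F → Shifted k F → HasU F s (2 * s + 1) → {k + 2, k + 3, k + 4} ∈ F →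
    6 * (F.card : ℤ) ≤ G2 n s ∨ 6 * (F.card : ℤ) ≤ G3 s := by
  induction n using Nat.strong_induction_on with
  | _ n ih =>
  intro s k F hs hn hF hS hU h234
  rcases hn.eq_or_lt with hn' | hn'
  · right
    have h := hF.card_le
    rw [← hn'] at h
    rw [← six_G3]
    exact_mod_cast Nat.mul_le_mul_left 6 h
  obtain ⟨n, rfl⟩ : ∃ m, n = m + 1 := ⟨n - 1, by omega⟩
  have hF' := Unif.filter_last (m := k + n) hF
  have hS' := hS.filter_last (m := k + n) hF
  have hU' := hU.mono (Finset.filter_subset (fun e => k + n + 1 ∉ e) F)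
  have hX' := ih n (by omega) s k _ hs (by omega) hF' hS' hU'
    (Finset.mem_filter.2 ⟨h234, by simp; omega⟩)
  have hsplit := Finset.card_filter_add_card_filter_not (s := F) (fun e => k + n + 1 ∈ e)
  have hsplit1 := Finset.card_filter_add_card_filter_not (s := F) (fun e => k + 1 ∈ e)
  set X' := (F.filter (fun e => k + n + 1 ∉ e)).card with hX'def
  set Y := (F.filter (fun e => k + n + 1 ∈ e)).card with hY
  have hG2mono : G2 n s ≤ G2 (n + 1 : ℕ) s := by
    unfold G2; push_cast
    have : (0 : ℤ) ≤ (s + 1) * s := by positivity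
    linarith
  have hlast : ∀ e ∈ F, k + n + 1 ∈ e → ∃ a b, k < a ∧ a < b ∧ b < k + n + 1 ∧
      e = {a, b, k + n + 1} := by
    intro e he hme
    obtain ⟨a, b, c, h1, h2, h3, h4, rfl⟩ := hF.exists_eq he
    have : c = k + n + 1 := by simp at hme; omega
    subst this
    exact ⟨a, b, h1, h2, h3, rfl⟩
  by_cases hY0 : Y = 0
  · have : F.card = X' := by omega
    rw [this]
    exact hX'.imp_left fun h => h.trans hG2mono
  have h12n : {k + 1, k + 2, k + (n + 1)} ∈ F := by
    obtain ⟨e, he⟩ := Finset.card_pos.1 (Nat.pos_of_ne_zero hY0)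
    obtain ⟨he, hme⟩ := Finset.mem_filter.1 he
    obtain ⟨a, b, h1, h2, h3, rfl⟩ := hlast _ he hme
    exact hS.mem_of_le he h2 h3 (by omega) (by omega) (by omega) (by omega) (by omega) le_rfl
  have hfirst : ∀ e ∈ F, k + 1 ∈ e → ∃ a b, k + 1 < a ∧ a < b ∧ b ≤ k + n + 1 ∧
      e = {k + 1, a, b} := by
    intro e he hme
    obtain ⟨a, b, c, h1, h2, h3, h4, rfl⟩ := hF.exists_eq he
    have : a = k + 1 := by simp at hme; omega
    subst this
    exact ⟨b, c, h2, h3, h4, rfl⟩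
  -- unless `{k+3, k+4, k+5}` is an edge, the edges avoiding `k + 1` form a star with centre `k + 2`
  have hsecond : {k + 3, k + 4, k + 5} ∉ F → ∀ e ∈ F, k + 1 ∉ e → ∃ a b, k + 2 < a ∧ a < b ∧
      b ≤ k + n + 1 ∧ e = {k + 2, a, b} := by
    intro h345 e he hme
    obtain ⟨a, b, c, h1, h2, h3, h4, rfl⟩ := hF.exists_eq he
    have h5 : a ≠ k + 1 := by rintro rfl; simp at hme
    by_cases ha : a = k + 2
    · subst ha
      exact ⟨b, c, h2, h3, h4, rfl⟩
    · exact absurd (hS.mem_of_le he h2 h3 (by omega) (by omega) (by omega) (by omega) (by omega)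
        (by omega)) h345
  set A := (F.filter (fun e => k + 1 ∈ e)).card with hA
  set B := (F.filter (fun e => k + 1 ∉ e)).card with hB
  have hF1 : Unif (k + 1) (k + 1 + n) (F.filter (fun e => k + 1 ∉ e)) := by
    have := hF.filter_first
    rwa [show k + (n + 1) = k + 1 + n by ring] at this
  have hS1 := hS.filter_first
  have hU1 : HasU (F.filter (fun e => k + 1 ∉ e)) (s - 1) (2 * (s - 1) + 1) := by
    obtain ⟨t, rfl⟩ : ∃ t, s = t + 1 := ⟨s - 1, by omega⟩
    exact hU.del_first hF hS (by omega) h12n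
  have hmiss0 : (s = 2 ∧ n = 5) → F.card ≤ 10 := by
    rintro ⟨rfl, rfl⟩
    exact card_le_ten hF hU
  -- if `G3 s ≤ G2 n s`, or if `y` is small enough, deleting the last vertex suffices; this leaves the
  -- range `G2 n s < G3 s`
  have key : ∀ y : ℤ, (Y : ℤ) ≤ y → 2 * y ≤ (s + 1) * s →
      (3 ≤ s → G2 n s < G3 s → G2 (n + 1 : ℕ) s < G3 s + 6 * y →
        6 * (F.card : ℤ) ≤ G2 (n + 1 : ℕ) s ∨ 6 * (F.card : ℤ) ≤ G3 s) →
      6 * (F.card : ℤ) ≤ G2 (n + 1 : ℕ) s ∨ 6 * (F.card : ℤ) ≤ G3 s := by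
    intro y hy hy2 hmain
    have hXY : (F.card : ℤ) = Y + X' := by exact_mod_cast hsplit.symm
    have hstep : G2 (n + 1 : ℕ) s = G2 n s + 3 * ((s + 1) * s) := by
      unfold G2; push_cast; ring
    by_cases hg : G3 s ≤ G2 n s
    · left
      rcases hX' with h | h <;> linarith
    by_cases hg' : G3 s + 6 * y ≤ G2 (n + 1 : ℕ) s
    · left
      rcases hX' with h | h <;> linarith
    by_cases hs3 : 3 ≤ s
    · exact hmain hs3 (by linarith) (by linarith)
    · have hs2 : s = 2 := by omega
      subst hs2
      have h5 : n = 5 := by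
        have : ¬ (6 ≤ n) := by
          intro h
          apply hg
          unfold G2 G3
          push_cast
          have : (6 : ℤ) ≤ n := by exact_mod_cast h
          linarith
        omega
      have := hmiss0 ⟨rfl, h5⟩
      right
      unfold G3
      zify at this
      push_cast
      linarith
  have hsum : (F.card : ℤ) = A + B := by exact_mod_cast hsplit1.symm
  by_cases h23n : {k + 2, k + 3, k + (n + 1)} ∈ F
  · -- every pair in the link of the last vertex lies among the first `s + 1` vertices
    have h23 : {k + 2, k + 3, k + (2 * s + 2)} ∈ F :=
      hS.mem_of_le h23n (by omega) (by omega) (by omega) (by omega) (by omega) le_rfl le_rfl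
        (by omega)
    obtain ⟨i, hi, hmiss⟩ := hU.exists_notMemB hs h23
    have hlink : ∀ r a b, k + 1 ≤ r → r < a → a < b → {r, a, b} ∈ F →
        a < k + 4 + i ∨ b < k + 2 * s + 1 - i := by
      intro r a b hr hra hab hm
      by_contra! hcon
      exact hmiss (hS.mem_of_le hm hra hab (by omega) (by omega) (by omega) hr hcon.1 hcon.2)
    have hYle : Y ≤ (s + 1).choose 2 := by
      have hsub : F.filter (fun e => k + n + 1 ∈ e) ⊆
          (Finset.powersetCard 2 (Finset.Ioc k (k + s + 1))).image (insert (k + n + 1)) := by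
        intro e he
        obtain ⟨he, hme⟩ := Finset.mem_filter.1 he
        obtain ⟨a, b, h1, h2, h3, rfl⟩ := hlast e he hme
        rw [Finset.mem_image]
        refine ⟨{a, b}, Finset.mem_powersetCard.2 ⟨?_, Finset.card_pair h2.ne⟩, ?_⟩
        · have hb : b ≤ k + s + 1 := by
            by_contra! hcon
            refine hmiss (hS.mem_of_le he h2 h3 ?_ ?_ ?_ ?_ ?_ ?_) <;> omega
          intro x hx
          simp at hx ⊢
          omega
        · ext; simp; tauto
      refine (Finset.card_le_card hsub).trans (Finset.card_image_le.trans ?_)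
      rw [Finset.card_powersetCard, Nat.card_Ioc]
      exact Nat.choose_le_choose _ (by omega)
    have hch := two_mul_choose_two (s + 1)
    refine key ((s + 1).choose 2 : ℕ) (by exact_mod_cast hYle) (by push_cast at *; linarith) ?_
    intro hs3 hg _
    rw [hsum]
    have hAle := cast_star _ _ _ A (star_card_le (r := k + 1) (m := k + n + 1) (U := k + 4 + i)
      (V := k + 2 * s + 1 - i) (F := F.filter (fun e => k + 1 ∈ e)) (by
        intro e he
        obtain ⟨he, hme⟩ := Finset.mem_filter.1 he
        obtain ⟨a, b, h1, h2, h3, rfl⟩ := hfirst e he hme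
        exact ⟨a, b, h1, h2, h3, hlink _ _ _ le_rfl h1 h2 he, rfl⟩))
    rw [show k + 2 * s + 1 - i - 1 - (k + 1) = 2 * s - 1 - i by omega,
      show k + 4 + i - 1 - (k + 1) = 2 + i by omega,
      show k + n + 1 + 1 - (k + 2 * s + 1 - i) = n + 1 - 2 * s + i by omega] at hAle
    refine arithB (j := i) (by exact_mod_cast hs3) (by exact_mod_cast hn') (by simpa using hg)
      (by positivity) (by omega) ?_ ?_
    · push_cast [show i ≤ 2 * s - 1 by omega, show 1 ≤ 2 * s by omega,
        show 2 * s ≤ n + 1 by omega] at hAle ⊢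
      linarith
    · by_cases h345 : {k + 3, k + 4, k + 5} ∈ F
      · right
        have := ih n (by omega) (s - 1) (k + 1) _ (by omega) (by omega) hF1 hS1 hU1
          (Finset.mem_filter.2 ⟨h345, by simp⟩)
        push_cast [show 1 ≤ s by omega] at this ⊢
        simpa using this
      · left
        have hBle := cast_star _ _ _ B (star_card_le (r := k + 2) (m := k + n + 1)
          (U := k + 4 + i) (V := k + 2 * s + 1 - i) (F := F.filter (fun e => k + 1 ∉ e)) (by
          intro e he
          obtain ⟨he, hme⟩ := Finset.mem_filter.1 he
          obtain ⟨a, b, h1, h2, h3, rfl⟩ := hsecond h345 e he hme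
          exact ⟨a, b, h1, h2, h3, hlink _ _ _ (by omega) h1 h2 he, rfl⟩))
        rw [show k + 2 * s + 1 - i - 1 - (k + 2) = 2 * s - 2 - i by omega,
          show k + 4 + i - 1 - (k + 2) = 1 + i by omega,
          show k + n + 1 + 1 - (k + 2 * s + 1 - i) = n + 1 - 2 * s + i by omega] at hBle
        push_cast [show i ≤ 2 * s - 2 by omega, show 2 ≤ 2 * s by omega,
          show 2 * s ≤ n + 1 by omega] at hBle ⊢
        linarith
  · -- the edges through the last vertex all contain the first one
    obtain ⟨i, hi, hmiss⟩ := hU.exists_notMemA hs h234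
    have hlink : ∀ r a b, k + 1 ≤ r → r < a → a < b → {r, a, b} ∈ F →
        a < k + 5 + i ∨ b < k + 2 * s + 2 - i := by
      intro r a b hr hra hab hm
      by_contra! hcon
      exact hmiss (hS.mem_of_le hm hra hab (by omega) (by omega) (by omega) hr hcon.1 hcon.2)
    have hlast1 : ∀ a b, {a, b, k + n + 1} ∈ F → k < a → a < b → b < k + n + 1 → a = k + 1 := by
      intro a b hm h1 h2 h3
      by_contra hne
      exact h23n (hS.mem_of_le hm h2 h3 (by omega) (by omega) (by omega) (by omega) (by omega)
        (by omega))
    have hYle : Y ≤ s + 1 := by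
      have hsub : F.filter (fun e => k + n + 1 ∈ e) ⊆
          (Finset.Ioc (k + 1) (k + s + 2)).image (fun b => {k + 1, b, k + n + 1}) := by
        intro e he
        obtain ⟨he, hme⟩ := Finset.mem_filter.1 he
        obtain ⟨a, b, h1, h2, h3, rfl⟩ := hlast e he hme
        obtain rfl := hlast1 a b he h1 h2 h3
        refine Finset.mem_image.2 ⟨b, Finset.mem_Ioc.2 ⟨h2, ?_⟩, rfl⟩
        by_contra! hcon
        refine hmiss (hS.mem_of_le he h2 h3 ?_ ?_ ?_ ?_ ?_ ?_) <;> omega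
      refine (Finset.card_le_card hsub).trans (Finset.card_image_le.trans ?_)
      rw [Nat.card_Ioc]
      omega
    have hs' : (2 : ℤ) ≤ s := by exact_mod_cast hs
    refine key (s + 1) (by exact_mod_cast hYle) (by nlinarith) ?_
    intro hs3 hg hg'
    rw [hsum]
    have hAle := cast_star _ _ _ A (star_card_le (r := k + 1) (m := k + n + 1) (U := k + 5 + i)
      (V := k + 2 * s + 2 - i) (F := F.filter (fun e => k + 1 ∈ e)) (by
        intro e he
        obtain ⟨he, hme⟩ := Finset.mem_filter.1 he
        obtain ⟨a, b, h1, h2, h3, rfl⟩ := hfirst e he hme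
        exact ⟨a, b, h1, h2, h3, hlink _ _ _ le_rfl h1 h2 he, rfl⟩))
    rw [show k + 2 * s + 2 - i - 1 - (k + 1) = 2 * s - i by omega,
      show k + 5 + i - 1 - (k + 1) = 3 + i by omega,
      show k + n + 1 + 1 - (k + 2 * s + 2 - i) = n - 2 * s + i by omega] at hAle
    -- edges avoiding `k + 1` also avoid the last vertex
    have havoid : ∀ e ∈ F, k + 1 ∉ e → k + n + 1 ∉ e := by
      intro e he hme hme'
      obtain ⟨a, b, h1, h2, h3, rfl⟩ := hlast e he hme'
      obtain rfl := hlast1 a b he h1 h2 h3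
      simp at hme
    refine arithA (j := i) (by exact_mod_cast hs3) (by exact_mod_cast hn') (by simpa using hg)
      (by simpa using hg') (by positivity) (by omega) ?_ ?_
    · push_cast [show i ≤ 2 * s by omega, show 2 * s ≤ n by omega] at hAle ⊢
      linarith
    · by_cases h345 : {k + 3, k + 4, k + 5} ∈ F
      · right
        obtain ⟨m, rfl⟩ : ∃ m, n = m + 1 := ⟨n - 1, by omega⟩
        have hF2 : Unif (k + 1) (k + 1 + m) (F.filter (fun e => k + 1 ∉ e)) := by
          intro e he
          refine ⟨fun x hx => ?_, (hF1 e he).2⟩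
          have h1 := Finset.mem_Ioc.1 ((hF1 e he).1 hx)
          obtain ⟨he, hme⟩ := Finset.mem_filter.1 he
          have h2 : x ≠ k + (m + 1) + 1 := by rintro rfl; exact havoid e he hme hx
          rw [Finset.mem_Ioc]; omega
        have := ih m (by omega) (s - 1) (k + 1) _ (by omega) (by omega) hF2 hS1 hU1
          (Finset.mem_filter.2 ⟨h345, by simp⟩)
        push_cast [show 1 ≤ s by omega] at this ⊢
        convert this using 3
        ring
      · left
        have hBle := cast_star _ _ _ B (star_card_le (r := k + 2) (m := k + n)
          (U := k + 5 + i) (V := k + 2 * s + 2 - i) (F := F.filter (fun e => k + 1 ∉ e)) (by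
          intro e he
          obtain ⟨he, hme⟩ := Finset.mem_filter.1 he
          have hav := havoid e he hme
          obtain ⟨a, b, h1, h2, h3, rfl⟩ := hsecond h345 e he hme
          have : b ≠ k + n + 1 := by rintro rfl; simp at hav
          exact ⟨a, b, h1, h2, by omega, hlink _ _ _ (by omega) h1 h2 he, rfl⟩))
        rw [show k + 2 * s + 2 - i - 1 - (k + 2) = 2 * s - 1 - i by omega,
          show k + 5 + i - 1 - (k + 2) = 2 + i by omega,
          show k + n + 1 - (k + 2 * s + 2 - i) = n + i - 1 - 2 * s by omega] at hBle
        push_cast [show i ≤ 2 * s - 1 by omega, show 1 ≤ 2 * s by omega,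
          show 2 * s ≤ n + i - 1 by omega, show 1 ≤ n + i by omega] at hBle ⊢
        linarith

/-! ### Shifting -/

/-- The `(i, j)`-shift of an edge `e` relative to `F`: replace `j` by `i` if `j ∈ e`, `i ∉ e` and
the result is not already in `F`. -/
def shiftEdge (F : Finset (Finset ℕ)) (i j : ℕ) (e : Finset ℕ) : Finset ℕ :=
  if j ∈ e ∧ i ∉ e ∧ insert i (e.erase j) ∉ F then insert i (e.erase j) else e

theorem insert_erase_swap {i j : ℕ} {e : Finset ℕ} (hj : j ∈ e) (hi : i ∉ e) :
    insert j ((insert i (e.erase j)).erase i) = e := by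
  have : i ≠ j := by rintro rfl; exact hi hj
  rw [Finset.erase_insert (by simp [hi]), Finset.insert_erase hj]

theorem shiftEdge_injOn (F : Finset (Finset ℕ)) (i j : ℕ) :
    Set.InjOn (shiftEdge F i j) (F : Set (Finset ℕ)) := by
  intro a ha b hb hab
  unfold shiftEdge at hab
  split_ifs at hab with h1 h2 h2
  · rw [← insert_erase_swap h1.1 h1.2.1, hab, insert_erase_swap h2.1 h2.2.1]
  · exact absurd hb (hab ▸ h1.2.2)
  · exact absurd ha (hab ▸ h2.2.2)
  · exact hab

/-- Shifting preserves `U(s, q)`: edges of the shifted family lift to edges of `F` whose union is at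
least as large. -/
theorem HasU.shift {F : Finset (Finset ℕ)} {s q i j : ℕ} (hij : i ≠ j) (hU : HasU F s q) :
    HasU (F.image (shiftEdge F i j)) s q := by
  classical
  intro f hf
  have hpre : ∀ l, ∃ b ∈ F, (b = f l ∧ (j ∈ b → i ∉ b → insert i (b.erase j) ∈ F)) ∨
      (j ∈ b ∧ i ∉ b ∧ f l = insert i (b.erase j)) := by
    intro l
    obtain ⟨b, hb, hbl⟩ := Finset.mem_image.1 (hf l)
    refine ⟨b, hb, ?_⟩
    unfold shiftEdge at hbl
    split_ifs at hbl with h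
    · exact Or.inr ⟨h.1, h.2.1, hbl.symm⟩
    · left
      refine ⟨hbl, fun h1 h2 => ?_⟩
      by_contra h3
      exact h ⟨h1, h2, h3⟩
  choose g hgF hg using hpre
  -- each edge `g l` of `F` contains `f l` up to the vertex `i`
  have hfg : ∀ l, ∀ x ∈ f l, x ≠ i → x ∈ g l := by
    intro l x hx hxi
    rcases hg l with ⟨h, -⟩ | ⟨-, -, h⟩
    · rwa [h]
    · rw [h] at hx
      simp [hxi] at hx
      exact hx.2
  by_cases hiW : i ∈ Finset.univ.biUnion f ∧ i ∉ Finset.univ.biUnion g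
  swap
  · refine (Finset.card_le_card ?_).trans (hU g hgF)
    intro x hx
    by_cases hxi : x = i
    · subst hxi
      by_contra h
      exact hiW ⟨hx, h⟩
    · obtain ⟨l, -, hl⟩ := Finset.mem_biUnion.1 hx
      exact Finset.mem_biUnion.2 ⟨l, Finset.mem_univ _, hfg l x hl hxi⟩
  obtain ⟨hiW, hig⟩ := hiW
  have hig' : ∀ l, i ∉ g l := fun l h => hig (Finset.mem_biUnion.2 ⟨l, Finset.mem_univ _, h⟩)
  obtain ⟨l0, -, hl0⟩ := Finset.mem_biUnion.1 hiW
  have hjl0 : j ∈ g l0 ∧ f l0 = insert i ((g l0).erase j) := by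
    rcases hg l0 with ⟨h, -⟩ | ⟨h, -, h'⟩
    · exact absurd (h ▸ hl0) (hig' l0)
    · exact ⟨h, h'⟩
  by_cases hjW : j ∈ Finset.univ.biUnion f
  · -- one edge through `j` can be shifted inside `F`, which brings `i` back into the union
    obtain ⟨l1, -, hl1⟩ := Finset.mem_biUnion.1 hjW
    have hl1' : g l1 = f l1 ∧ insert i ((g l1).erase j) ∈ F := by
      rcases hg l1 with ⟨h, h'⟩ | ⟨h, -, h'⟩
      · exact ⟨h, h' (h ▸ hl1) (hig' l1)⟩
      · rw [h'] at hl1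
        simp [hij.symm] at hl1
    have hne : l0 ≠ l1 := by
      rintro rfl
      rw [← hl1'.1] at hl0
      exact hig' _ hl0
    refine le_trans (Finset.card_le_card ?_)
      (hU (Function.update g l1 (insert i ((g l1).erase j))) ?_)
    · intro x hx
      rw [Finset.mem_biUnion]
      by_cases hxi : x = i
      · exact ⟨l1, Finset.mem_univ _, by simp [hxi]⟩
      by_cases hxj : x = j
      · exact ⟨l0, Finset.mem_univ _, by simpa [hne, hxj] using hjl0.1⟩
      obtain ⟨l, -, hl⟩ := Finset.mem_biUnion.1 hx
      refine ⟨l, Finset.mem_univ _, ?_⟩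
      have := hfg l x hl hxi
      by_cases h : l = l1
      · subst h
        simp [hxj, this]
      · simpa [h] using this
    · intro l
      by_cases h : l = l1
      · subst h
        simpa using hl1'.2
      · simpa [h] using hgF l
  · have hsub : insert j ((Finset.univ.biUnion f).erase i) ⊆ Finset.univ.biUnion g := by
      intro x hx
      rcases Finset.mem_insert.1 hx with rfl | hx
      · exact Finset.mem_biUnion.2 ⟨l0, Finset.mem_univ _, hjl0.1⟩
      · obtain ⟨hxi, hx⟩ := Finset.mem_erase.1 hx
        obtain ⟨l, -, hl⟩ := Finset.mem_biUnion.1 hx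
        exact Finset.mem_biUnion.2 ⟨l, Finset.mem_univ _, hfg l x hl hxi⟩
    have h := Finset.card_le_card hsub
    rw [Finset.card_insert_of_notMem (by simp [hjW]), Finset.card_erase_add_one hiW] at h
    exact h.trans (hU g hgF)

theorem sum_shiftEdge_le (F : Finset (Finset ℕ)) {i j : ℕ} (hij : i < j) (e : Finset ℕ) :
    ∑ x ∈ shiftEdge F i j e, x ≤ ∑ x ∈ e, x ∧
      (shiftEdge F i j e ≠ e → ∑ x ∈ shiftEdge F i j e, x < ∑ x ∈ e, x) := by
  have key : shiftEdge F i j e ≠ e → ∑ x ∈ shiftEdge F i j e, x < ∑ x ∈ e, x := by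
    unfold shiftEdge
    split_ifs with h
    · intro _
      rw [Finset.sum_insert (by simp [h.2.1]), ← Finset.add_sum_erase e (fun x => x) h.1]
      omega
    · simp
  refine ⟨?_, key⟩
  by_cases h : shiftEdge F i j e = e
  · rw [h]
  · exact (key h).le

/-- Every family can be replaced by a shifted one of the same size, by shifting as long as the sum of
all vertices of all edges decreases. -/
theorem exists_shifted {n s q : ℕ} (w : ℕ) : ∀ F : Finset (Finset ℕ), ∑ e ∈ F, ∑ x ∈ e, x = w →
    Unif 0 n F → HasU F s q →
    ∃ G : Finset (Finset ℕ), G.card = F.card ∧ Unif 0 n G ∧ HasU G s q ∧ Shifted 0 G := by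
  induction w using Nat.strong_induction_on with
  | _ w ih =>
  intro F hw hF hU
  by_cases hS : Shifted 0 F
  · exact ⟨F, rfl, hF, hU, hS⟩
  unfold Shifted at hS
  push Not at hS
  obtain ⟨e, he, i, j, hi, hij, hj, hie, hnot⟩ := hS
  have hinj := shiftEdge_injOn F i j
  have hlt : ∑ e ∈ F.image (shiftEdge F i j), ∑ x ∈ e, x < w := by
    rw [Finset.sum_image hinj, ← hw]
    refine Finset.sum_lt_sum (fun a _ => (sum_shiftEdge_le F hij a).1)
      ⟨e, he, (sum_shiftEdge_le F hij e).2 ?_⟩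
    rw [shiftEdge, if_pos ⟨hj, hie, hnot⟩]
    intro h
    exact hie (h ▸ Finset.mem_insert_self _ _)
  obtain ⟨G, h1, h2⟩ := ih _ hlt _ rfl (by
    intro a ha
    obtain ⟨b, hb, rfl⟩ := Finset.mem_image.1 ha
    obtain ⟨hb1, hb2⟩ := hF b hb
    unfold shiftEdge
    split_ifs with h
    · refine ⟨?_, ?_⟩
      · have := Finset.mem_Ioc.1 (hb1 h.1)
        refine Finset.insert_subset (Finset.mem_Ioc.2 (by omega)) ?_
        exact (Finset.erase_subset _ _).trans hb1
      · rw [Finset.card_insert_of_notMem (by simp [h.2.1]), Finset.card_erase_add_one h.1, hb2]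
    · exact ⟨hb1, hb2⟩) (hU.shift hij.ne)
  exact ⟨G, h1.trans (Finset.card_image_of_injOn hinj), h2⟩

/-- Main theorem: Frankl–Kupavskii conjecture for 3-graphs. -/
theorem frankl_kupavskii (n s : ℕ) (hs : 2 ≤ s) (hn : 2 * s + 2 ≤ n)
    (F : Finset (Finset ℕ))
    (hF : ∀ e ∈ F, e ⊆ Finset.Icc 1 n ∧ e.card = 3)
    (hU : HasU F s (2 * s + 1)) :
    F.card ≤ max (Nat.choose (n - 1) 2)
      (max ((n - s - 1) * Nat.choose (s + 1) 2 + Nat.choose (s + 1) 3)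
        (Nat.choose (2 * s + 1) 3)) := by
  have hF0 : Unif 0 n F := fun e he => ⟨fun x hx => by
    have := Finset.mem_Icc.1 ((hF e he).1 hx)
    exact Finset.mem_Ioc.2 (by omega), (hF e he).2⟩
  obtain ⟨G, hcard, hG, hGU, hGS⟩ := exists_shifted _ F rfl hF0 hU
  rw [← hcard]
  by_cases h234 : ({2, 3, 4} : Finset ℕ) ∈ G
  · have h := nonstar_bound n s 0 G hs (by omega) (by simpa using hG) hGS hGU (by simpa using h234)
    refine le_max_of_le_right (le_max_iff.2 ?_)
    rw [← six_G2 (by omega), ← six_G3] at h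
    refine h.imp (fun h => ?_) (fun h => ?_)
    · exact Nat.le_of_mul_le_mul_left (by exact_mod_cast h) (show 0 < 6 by norm_num)
    · exact Nat.le_of_mul_le_mul_left (by exact_mod_cast h) (show 0 < 6 by norm_num)
  · -- every edge of `G` contains the vertex `1`
    refine le_max_of_le_left ?_
    have h := star_card_le (r := 1) (m := n) (U := 2) (V := n + 1) (F := G) (by
      intro e he
      obtain ⟨a, b, c, h1, h2, h3, h4, rfl⟩ := hG.exists_eq he
      by_cases ha : a = 1
      · subst ha
        exact ⟨b, c, h2, h3, h4, by omega, rfl⟩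
      · exact absurd (hGS.mem_of_le he h2 h3 (by omega) (by omega) (by omega) (by omega)
          (by omega) (by omega)) h234)
    simpa using h
end

section
/- Let n and s be integers with s ≥ 3 and n ≥ 2s + 2. Let F be a stable 3-graph with vertex set [n]. If F has property U(s, 2s+1) and ν(∂F) = s + 1, then |F| ≤ max{ C(n−1, 2), (n−s−1)·C(s+1, 2) + C(s+1, 3), C(2s+1, 3) }. -/
/-!
A missing shadow edge `{t + 1, 2s + 4 - t}` with `0 ≤ t ≤ s + 1` exists (`exists_missing`), since
otherwise the shadow has a matching of size `s + 2`. For `t ≥ 1` stability then puts every edge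
inside `[2s + 3 - t]` or gives it two vertices in `[t]` (`card_le_of_missing`).

* If some `t ≥ 3` is missing, the resulting bound on `|F|` (`bnd`) is a convex function of `t`. At
  `t = s + 1` it is the second term of the maximum, and at `t = 3` it is at most the second or the
  third term (`bnd_le`).

* Otherwise the edges `{1, i, 2s + 5 - i}`, `4 ≤ i ≤ s + 2`, all belong to `F`. Property
  `U(s, 2s + 1)` forbids `s` edges covering `[2s + 2]`, whence `{2, 3, 2s + 2} ∉ F`, so every edge
  leaving `[2s + 1]` contains `1`. Either no edge leaves `[2s + 1]`, and `|F| ≤ C(2s + 1, 3)`; or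
  `{1, 2, 2s + 2} ∈ F`, and then the same covering argument removes the `(s - 1)³` triples
  `3 ≤ a < b < c ≤ 2s + 1` with `b + c ≥ 2s + 5` (`card_inner`). For missing `t = 2`, `1`, `0`, there
  are at most `n - 2s - 1`, `2s`, `4s + 1` edges leaving `[2s + 1]`. This is at most `(s - 1)³`
  except for `t = 2` and large `n`, where `bnd` takes over, and for `t = 0`, `s = 3`, where the
  second term suffices if `n ≥ 10` and `card_le_nine` settles `n = 9`.
-/

open Finset

/-! ### Stability for sorted triples -/

theorem sort_triple {a b c : ℕ} (hab : a < b) (hbc : b < c) :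
    ({a, b, c} : Finset ℕ).sort (· ≤ ·) = [a, b, c] := by
  rw [Finset.sort_insert, Finset.sort_insert, Finset.sort_singleton]
  · simp only [mem_singleton]; omega
  · simp only [mem_singleton]; omega
  · simp only [mem_insert, mem_singleton]; omega
  · simp only [mem_insert, mem_singleton]; omega

theorem precS_triple {a b c x y z : ℕ} (hab : a < b) (hbc : b < c) (hxy : x < y) (hyz : y < z)
    (hax : a ≤ x) (hby : b ≤ y) (hcz : c ≤ z) : PrecS {a, b, c} {x, y, z} := by
  have h1 : ({a, b, c} : Finset ℕ).card = 3 :=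
    card_eq_three.2 ⟨a, b, c, by omega, by omega, by omega, rfl⟩
  have h2 : ({x, y, z} : Finset ℕ).card = 3 :=
    card_eq_three.2 ⟨x, y, z, by omega, by omega, by omega, rfl⟩
  refine ⟨h1.trans h2.symm, fun i hi => ?_⟩
  rw [h1] at hi
  rw [sort_triple hab hbc, sort_triple hxy hyz]
  interval_cases i <;> simpa

theorem exists_triple {e : Finset ℕ} (he : e.card = 3) :
    ∃ a b c, a < b ∧ b < c ∧ e = {a, b, c} := by
  have hs := e.sort_toFinset (· ≤ ·)
  have hl := e.length_sort (· ≤ ·)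
  have hp := e.sortedLT_sort
  rw [he] at hl
  obtain ⟨a, b, c, h⟩ := List.length_eq_three.1 hl
  rw [h] at hs hp
  have hp := hp.pairwise
  simp only [List.pairwise_cons, List.mem_cons] at hp
  refine ⟨a, b, c, hp.1 b (by simp), hp.2.1 c (by simp), ?_⟩
  rw [← hs]; ext x; simp

/-- A stable `3`-graph on `[n]`, in terms of its sorted triples: `down` is closure under `≺`, and
`triple` says that the edges are `3`-subsets of `[n]`. -/
structure Setup (n : ℕ) (F : Finset (Finset ℕ)) : Prop where
  down : ∀ a b c x y z : ℕ, 1 ≤ a → a < b → b < c → x < y → y < z → a ≤ x → b ≤ y → c ≤ z →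
    ({x, y, z} : Finset ℕ) ∈ F → ({a, b, c} : Finset ℕ) ∈ F
  triple : ∀ e ∈ F, ∃ a b c, 1 ≤ a ∧ a < b ∧ b < c ∧ c ≤ n ∧ e = {a, b, c}

theorem setup_of_stable {n : ℕ} {F : Finset (Finset ℕ)}
    (hF : ∀ e ∈ F, e ⊆ Finset.Icc 1 n ∧ e.card = 3) (hst : IsStable n F) : Setup n F := by
  constructor
  · intro a b c x y z ha hab hbc hxy hyz hax hby hcz h
    refine hst _ _ ?_ h (precS_triple hab hbc hxy hyz hax hby hcz)
    have := (hF _ h).1 (show z ∈ _ by simp)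
    rw [mem_Icc] at this
    intro w hw
    simp only [mem_insert, mem_singleton] at hw
    rw [mem_Icc]; omega
  · intro e he
    obtain ⟨hsub, hcard⟩ := hF e he
    obtain ⟨a, b, c, hab, hbc, rfl⟩ := exists_triple hcard
    have h1 := hsub (show a ∈ _ by simp)
    have h2 := hsub (show c ∈ _ by simp)
    rw [mem_Icc] at h1 h2
    exact ⟨a, b, c, h1.1, hab, hbc, h2.2, rfl⟩

/-! ### The missing shadow edge -/

/-- If the pairs `{i, 2s + 5 - i}`, `1 ≤ i ≤ s + 2`, all lay in the shadow, they would form a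
matching of size `s + 2`; hence one of the edges witnessing them is missing. The pair `{1, 2s + 4}`
(`t = 0`) needs a third vertex other than `1`. -/
theorem exists_missing {s : ℕ} {F : Finset (Finset ℕ)} (hν : matchNum (shadow2 F) = s + 1) :
    ({1, 2, 2 * s + 4} : Finset ℕ) ∉ F ∨
      ∃ t, 1 ≤ t ∧ t ≤ s + 1 ∧ ({1, t + 1, 2 * s + 4 - t} : Finset ℕ) ∉ F := by
  by_contra! hcon
  obtain ⟨h0, h1⟩ := hcon
  set M : Finset (Finset ℕ) := (Icc 1 (s + 2)).image fun i => {i, 2 * s + 5 - i} with hM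
  have hpair : ∀ i ∈ Icc 1 (s + 2), ∀ x, x ∈ ({i, 2 * s + 5 - i} : Finset ℕ) →
      i = min x (2 * s + 5 - x) := by
    intro i hi x hx
    simp only [mem_Icc, mem_insert, mem_singleton] at hi hx
    omega
  have hcard : M.card = s + 2 := by
    rw [hM, card_image_of_injOn]
    · simp
    · intro i hi j hj hij
      have hij : ({i, 2 * s + 5 - i} : Finset ℕ) = {j, 2 * s + 5 - j} := hij
      have hx : i ∈ ({i, 2 * s + 5 - i} : Finset ℕ) := by simp
      rw [hpair i hi i hx]
      rw [hij] at hx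
      exact (hpair j hj i hx).symm
  have hsub : M ⊆ shadow2 F := by
    intro p hp
    rw [hM, mem_image] at hp
    obtain ⟨i, hi, rfl⟩ := hp
    rw [mem_Icc] at hi
    have h2 : ({i, 2 * s + 5 - i} : Finset ℕ).card = 2 := card_pair (by omega)
    rw [shadow2, mem_biUnion]
    rcases Nat.eq_or_lt_of_le hi.1 with rfl | hi1
    · refine ⟨_, h0, mem_powersetCard.2 ⟨?_, h2⟩⟩
      intro x; simp only [mem_insert, mem_singleton]; omega
    · refine ⟨_, h1 (i - 1) (by omega) (by omega), mem_powersetCard.2 ⟨?_, h2⟩⟩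
      intro x; simp only [mem_insert, mem_singleton]; omega
  have hle : M.card ≤ matchNum (shadow2 F) := by
    refine le_sup (f := card) (mem_filter.2 ⟨mem_powerset.2 hsub, ?_⟩)
    intro p hp q hq hpq
    rw [hM, mem_image] at hp hq
    obtain ⟨i, hi, rfl⟩ := hp
    obtain ⟨j, hj, rfl⟩ := hq
    rw [disjoint_left]
    intro x hx hx'
    exact hpq (by rw [hpair i hi x hx, ← hpair j hj x hx'])
  omega

/-- A missing edge `{1, t + 1, 2s + 4 - t}` forces every edge of a stable family either to lie in
`[2s + 3 - t]` or to have its two smallest elements in `[t]`. -/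
theorem card_le_of_missing {n s t : ℕ} {F : Finset (Finset ℕ)} (hF : Setup n F)
    (ht1 : 1 ≤ t) (ht : t ≤ s + 1) (hmiss : ({1, t + 1, 2 * s + 4 - t} : Finset ℕ) ∉ F) :
    F.card ≤ (2 * s + 3 - t).choose 3 + (n + 1 - (2 * s + 4 - t)) * t.choose 2 := by
  have hsub : F ⊆ powersetCard 3 (Icc 1 (2 * s + 3 - t)) ∪
      (Icc (2 * s + 4 - t) n ×ˢ powersetCard 2 (Icc 1 t)).image (fun p => insert p.1 p.2) := by
    intro e he
    obtain ⟨a, b, c, ha, hab, hbc, hc, rfl⟩ := hF.triple e he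
    rw [mem_union]
    by_cases hc' : c ≤ 2 * s + 3 - t
    · left
      refine mem_powersetCard.2 ⟨?_, card_eq_three.2 ⟨a, b, c, by omega, by omega, by omega, rfl⟩⟩
      intro x; simp only [mem_insert, mem_singleton, mem_Icc]; omega
    · right
      have hb : b ≤ t := by
        by_contra hb
        exact hmiss (hF.down 1 (t + 1) (2 * s + 4 - t) a b c (by omega) (by omega) (by omega)
          hab hbc ha (by omega) (by omega) he)
      refine mem_image.2 ⟨(c, {a, b}), ?_, ?_⟩
      · refine mem_product.2 ⟨mem_Icc.2 ⟨by dsimp only; omega, hc⟩, mem_powersetCard.2 ⟨?_, ?_⟩⟩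
        · intro x; simp only [mem_insert, mem_singleton, mem_Icc]; omega
        · exact card_pair (by omega)
      · ext x; simp only [mem_insert, mem_singleton]; omega
  refine (card_le_card hsub).trans ((card_union_le _ _).trans ?_)
  refine Nat.add_le_add (by simp) (card_image_le.trans ?_)
  simp

/-! ### Convexity of the bound in `t` -/

/-- A sequence that is discretely convex is bounded by its end values. -/
theorem le_max_of_convex (h : ℕ → ℤ) (K : ℕ) (hc : ∀ t, t + 2 ≤ K → 2 * h (t + 1) ≤ h t + h (t + 2))
    (t : ℕ) (ht : t ≤ K) : h t ≤ max (h 0) (h K) := by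
  have step : ∀ k, k + 1 ≤ K → h k ≤ max (h 0) (h (k + 1)) := by
    intro k
    induction k with
    | zero => intro _; exact le_max_left _ _
    | succ k ih =>
      intro hk
      have h1 := ih (by omega)
      have h2 := hc k hk
      have e : k + 1 + 1 = k + 2 := rfl
      rw [e]
      rw [le_max_iff] at h1 ⊢
      omega
  have key : ∀ k, k ≤ K → t ≤ k → h t ≤ max (h 0) (h k) := by
    intro k hk htk
    induction k, htk using Nat.le_induction with
    | base => exact le_max_right _ _
    | succ k htk ih =>
      have h1 := ih (by omega)
      have h2 := step k hk
      rw [le_max_iff] at h1 h2 ⊢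
      omega
  exact key K le_rfl ht

theorem choose_two_cast (m : ℕ) : ((m + 1).choose 2 : ℤ) = m.choose 2 + m := by
  rw [Nat.choose_succ_succ' m 1, Nat.choose_one_right]; push_cast; ring

theorem choose_three_cast (m : ℕ) : ((m + 1).choose 3 : ℤ) = m.choose 3 + m.choose 2 := by
  rw [Nat.choose_succ_succ' m 2]; push_cast; ring

/-- The bound of `card_le_of_missing` at `t = τ + 3`, for `n = 2s + 2 + u`. -/
def bnd (s u τ : ℕ) : ℤ := ((2 * s - τ).choose 3 : ℤ) + (u + 2 + τ) * ((τ + 3).choose 2 : ℤ)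

theorem bnd_convex (s u τ : ℕ) (h : τ + 2 ≤ s - 2) :
    2 * bnd s u (τ + 1) ≤ bnd s u τ + bnd s u (τ + 2) := by
  obtain ⟨m, hm⟩ : ∃ m, 2 * s - τ = m + 2 := ⟨2 * s - τ - 2, by omega⟩
  have e1 : 2 * s - (τ + 1) = m + 1 := by omega
  have e2 : 2 * s - (τ + 2) = m := by omega
  unfold bnd
  rw [hm, e1, e2, choose_three_cast (m + 1), choose_three_cast m, choose_two_cast m,
    show τ + 1 + 3 = τ + 3 + 1 by ring, show τ + 2 + 3 = τ + 3 + 1 + 1 by ring,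
    choose_two_cast (τ + 3 + 1), choose_two_cast (τ + 3)]
  push_cast
  nlinarith

theorem choose_two_even (s : ℕ) : ((2 * s).choose 2 : ℤ) = s * (2 * s - 1) := by
  induction s with
  | zero => simp
  | succ s ih =>
    rw [show 2 * (s + 1) = 2 * s + 1 + 1 by ring, choose_two_cast, choose_two_cast, ih]
    push_cast; ring

/-- If the third term does not dominate `bnd s u 0`, then `bnd` increases from `0` to `1`, and convexity
propagates the increase to the last value `bnd s u (s - 2)`. -/
theorem bnd_zero_le (s u : ℕ) (hs : 3 ≤ s) :
    bnd s u 0 ≤ max ((2 * s + 1).choose 3 : ℤ) (bnd s u (s - 2)) := by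
  rw [le_max_iff]
  have h42 : (Nat.choose 4 2 : ℤ) = 6 := by decide
  have e0 : bnd s u 0 = ((2 * s).choose 3 : ℤ) + (u + 2) * 3 := by
    unfold bnd; simp
  by_cases hsmall : ((u : ℤ) + 2) * 3 ≤ ((2 * s).choose 2 : ℤ)
  · left
    rw [e0, choose_three_cast]; linarith
  · right
    obtain ⟨m, hm⟩ : ∃ m, 2 * s = m + 1 := ⟨2 * s - 1, by omega⟩
    have e1 : bnd s u 1 = (m.choose 3 : ℤ) + (u + 3) * 6 := by
      unfold bnd
      rw [show 2 * s - 1 = m by omega, show 1 + 3 = 4 from rfl, h42]; push_cast; ring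
    have h01 : bnd s u 0 < bnd s u 1 := by
      rw [e0, e1, hm, choose_three_cast]
      rw [hm, choose_two_cast] at hsmall
      have : (0 : ℤ) ≤ m := by positivity
      linarith
    have := le_max_of_convex (bnd s u) (s - 2) (bnd_convex s u) 1 (by omega)
    rw [le_max_iff] at this
    omega

theorem bnd_le (s u τ : ℕ) (hs : 3 ≤ s) (hτ : τ ≤ s - 2) :
    bnd s u τ ≤ max ((2 * s + 1).choose 3 : ℤ) (bnd s u (s - 2)) := by
  have h1 := le_max_of_convex (bnd s u) (s - 2) (bnd_convex s u) τ hτ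
  have h2 := bnd_zero_le s u hs
  rw [le_max_iff] at h1 h2 ⊢
  omega

/-- The last value of `bnd` is the second term of the maximum, for `n = 2s + 2 + u`. -/
theorem bnd_last (s u : ℕ) (hs : 3 ≤ s) :
    bnd s u (s - 2) = ((2 * s + 2 + u - s - 1) * (s + 1).choose 2 + (s + 1).choose 3 : ℕ) := by
  unfold bnd
  rw [show 2 * s - (s - 2) = s + 1 + 1 by omega, show s - 2 + 3 = s + 1 by omega,
    choose_three_cast, show 2 * s + 2 + u - s - 1 = u + s + 1 by omega]
  have : ((s - 2 : ℕ) : ℤ) = s - 2 := by push_cast [Nat.cast_sub (show 2 ≤ s by omega)]; ring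
  rw [this]; push_cast; ring

/-! ### The triples to be excluded -/

/-- The triples `3 ≤ a < b < c ≤ 2s + 1` with `b + c ≥ 2s + 5`, parametrized by `j = c - s - 3`, then
`b`, then `a`. -/
def bad (s : ℕ) : Finset (Finset ℕ) :=
  ((range (s - 1)).sigma fun j => (Ico (s + 2 - j) (s + 2 + j + 1)).sigma fun b => Ico 3 b).image
    fun p => {p.2.2, p.2.1, s + 3 + p.1}

/-- The values `b` are symmetric about `m`, so their average is `m`; `j + 3 ≤ m` keeps `b - 3` from
truncating. -/
theorem sum_sym (m j : ℕ) (hj : j + 3 ≤ m) :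
    ∑ b ∈ Ico (m - j) (m + j + 1), (b - 3) = (2 * j + 1) * (m - 3) := by
  induction j with
  | zero => simp
  | succ j ih =>
    rw [sum_Ico_succ_top (by omega), sum_eq_sum_Ico_succ_bot (by omega),
      show m - (j + 1) + 1 = m - j by omega, show m + (j + 1) = m + j + 1 by ring,
      ih (by omega)]
    obtain ⟨q, rfl⟩ : ∃ q, m = q + j + 1 + 3 := ⟨m - (j + 4), by omega⟩
    rw [show q + j + 1 + 3 - (j + 1) - 3 = q by omega,
      show q + j + 1 + 3 - 3 = q + j + 1 by omega,
      show q + j + 1 + 3 + j + 1 - 3 = q + j + 1 + j + 1 by omega]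
    ring

theorem sum_odd (r : ℕ) : ∑ j ∈ range r, (2 * j + 1) = r ^ 2 := by
  induction r with
  | zero => simp
  | succ r ih => rw [sum_range_succ, ih]; ring

theorem triple_inj {a b c x y z : ℕ} (hab : a < b) (hbc : b < c) (hxy : x < y) (hyz : y < z)
    (h : ({a, b, c} : Finset ℕ) = {x, y, z}) : a = x ∧ b = y ∧ c = z := by
  have := sort_triple hab hbc
  rw [h, sort_triple hxy hyz] at this
  simp only [List.cons.injEq] at this
  omega

/-- For fixed `c = s + 3 + j` the values of `b` are symmetric about `s + 2`, so there are
`(2j + 1)(s - 1)` pairs `(a, b)`; summing the odd numbers gives `(s - 1)³`. -/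
theorem card_bad (s : ℕ) : (bad s).card = (s - 1) ^ 3 := by
  unfold bad
  rw [card_image_of_injOn]
  · rw [card_sigma]
    have : ∀ j ∈ range (s - 1), ((Ico (s + 2 - j) (s + 2 + j + 1)).sigma fun b => Ico 3 b).card
        = (2 * j + 1) * (s - 1) := by
      intro j hj
      rw [mem_range] at hj
      rw [card_sigma]
      simp only [Nat.card_Ico]
      rw [sum_sym (s + 2) j (by omega)]
      rfl
    rw [sum_congr rfl this, ← sum_mul, sum_odd]
    ring
  · rintro ⟨j, b, a⟩ h ⟨j', b', a'⟩ h' heq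
    simp only [coe_sigma, Set.mem_sigma_iff, mem_coe, mem_range, mem_Ico] at h h'
    have heq : ({a, b, s + 3 + j} : Finset ℕ) = {a', b', s + 3 + j'} := heq
    obtain ⟨rfl, rfl, h3⟩ := triple_inj (by omega) (by omega) (by omega) (by omega) heq
    obtain rfl : j = j' := by omega
    rfl

theorem mem_bad {s : ℕ} {e : Finset ℕ} (he : e ∈ bad s) :
    ∃ a b c, 3 ≤ a ∧ a < b ∧ b < c ∧ c ≤ 2 * s + 1 ∧ 2 * s + 5 ≤ b + c ∧ e = {a, b, c} := by
  unfold bad at he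
  rw [mem_image] at he
  obtain ⟨⟨j, b, a⟩, h, rfl⟩ := he
  simp only [mem_sigma, mem_range, mem_Ico] at h
  exact ⟨a, b, s + 3 + j, by omega, by omega, by omega, by omega, by omega, rfl⟩

/-! ### Covering arguments -/

/-- Property `U(s, 2s + 1)` forbids `s` edges that cover `[2s + 2]`. -/
theorem not_cover {s : ℕ} {F : Finset (Finset ℕ)} (hU : HasU F s (2 * s + 1)) (f : ℕ → Finset ℕ)
    (hf : ∀ i < s, f i ∈ F) (hcov : ∀ x, 1 ≤ x → x ≤ 2 * s + 2 → ∃ i < s, x ∈ f i) : False := by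
  have h := hU (fun i => f i.1) (fun i => hf i.1 i.2)
  have hsub : Icc 1 (2 * s + 2) ⊆ univ.biUnion fun i : Fin s => f i.1 := by
    intro x hx
    rw [mem_Icc] at hx
    obtain ⟨i, hi, hxi⟩ := hcov x hx.1 hx.2
    exact mem_biUnion.2 ⟨⟨i, hi⟩, mem_univ _, hxi⟩
  have := card_le_card hsub
  rw [Nat.card_Icc] at this
  omega

/-- `F` contains the edges `{1, i, 2s + 5 - i}`, `4 ≤ i ≤ s + 2`. These `s - 1` edges cover `1` and
`[4, 2s + 1]`. -/
def HasStar (s : ℕ) (F : Finset (Finset ℕ)) : Prop :=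
  ∀ i, 4 ≤ i → i ≤ s + 2 → ({1, i, 2 * s + 5 - i} : Finset ℕ) ∈ F

/-- Together with the star, `{2, 3, 2s + 2}` would cover `[2s + 2]` with `s` edges. -/
theorem not_mem_of_star {s : ℕ} {F : Finset (Finset ℕ)} (hs : 3 ≤ s)
    (hU : HasU F s (2 * s + 1)) (hstar : HasStar s F) : ({2, 3, 2 * s + 2} : Finset ℕ) ∉ F := by
  intro h
  refine not_cover hU (fun i => if i = 0 then {2, 3, 2 * s + 2} else {1, i + 3, 2 * s + 2 - i})
    ?_ ?_
  · intro i hi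
    split_ifs with h0
    · exact h
    · have := hstar (i + 3) (by omega) (by omega)
      rwa [show 2 * s + 5 - (i + 3) = 2 * s + 2 - i by omega] at this
  · intro x hx1 hx2
    obtain ⟨i, hi⟩ : ∃ i, i = if x = 1 then 1 else if x ≤ 3 ∨ x = 2 * s + 2 then 0 else
      if x ≤ s + 2 then x - 3 else 2 * s + 2 - x := ⟨_, rfl⟩
    refine ⟨i, by split_ifs at hi <;> omega, ?_⟩
    split_ifs at hi ⊢ <;> simp only [mem_insert, mem_singleton] <;> omega

/-- An edge `{a, b, c}` of this kind with `b + c ≥ 2s + 5` would give `{3, r, 2s + 5 - r} ∈ F` for some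
`r`; together with `{1, 2, 2s + 2}` and the rest of the star it would cover `[2s + 2]`. -/
theorem sum_lt_of_star {n s : ℕ} {F : Finset (Finset ℕ)} (hs : 3 ≤ s) (hF : Setup n F)
    (hU : HasU F s (2 * s + 1)) (hstar : HasStar s F) (h12 : ({1, 2, 2 * s + 2} : Finset ℕ) ∈ F)
    {a b c : ℕ} (ha : 3 ≤ a) (hab : a < b) (hbc : b < c) (habc : ({a, b, c} : Finset ℕ) ∈ F)
    (hc : c ≤ 2 * s + 1) : b + c < 2 * s + 5 := by
  by_contra! hlt
  obtain ⟨r, hr1, hr2, hr3, hr4⟩ :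
      ∃ r, 4 ≤ r ∧ r ≤ s + 2 ∧ r ≤ b ∧ 2 * s + 5 - r ≤ c := by
    refine ⟨min b (s + 2), ?_, ?_, ?_, ?_⟩ <;> omega
  have h3 : ({3, r, 2 * s + 5 - r} : Finset ℕ) ∈ F :=
    hF.down 3 r (2 * s + 5 - r) a b c (by omega) (by omega) (by omega) hab hbc ha hr3 hr4 habc
  -- Replace one edge `{1, r, 2s + 5 - r}` of the star by `{3, r, 2s + 5 - r}`.
  refine not_cover hU (fun i => if i = 0 then {1, 2, 2 * s + 2} else
    if i + 3 = r then {3, r, 2 * s + 5 - r} else {1, i + 3, 2 * s + 2 - i}) ?_ ?_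
  · intro i hi
    split_ifs with h0 h1
    · exact h12
    · exact h3
    · have := hstar (i + 3) (by omega) (by omega)
      rwa [show 2 * s + 5 - (i + 3) = 2 * s + 2 - i by omega] at this
  · intro x hx1 hx2
    obtain ⟨i, hi⟩ : ∃ i, i = if x = 3 then r - 3 else if x ≤ 2 ∨ x = 2 * s + 2 then 0 else
      if x ≤ s + 2 then x - 3 else 2 * s + 2 - x := ⟨_, rfl⟩
    refine ⟨i, by split_ifs at hi <;> omega, ?_⟩
    split_ifs at hi ⊢ <;> simp only [mem_insert, mem_singleton] <;> omega

/-- The edges inside `[2s + 1]` avoid all `(s - 1)³` triples of `bad s`. -/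
theorem card_inner {n s : ℕ} {F : Finset (Finset ℕ)} (hs : 3 ≤ s) (hF : Setup n F)
    (hU : HasU F s (2 * s + 1)) (hstar : HasStar s F) (h12 : ({1, 2, 2 * s + 2} : Finset ℕ) ∈ F) :
    (F.filter (· ⊆ Icc 1 (2 * s + 1))).card + (s - 1) ^ 3 ≤ (2 * s + 1).choose 3 := by
  rw [← card_bad s, ← card_union_of_disjoint]
  · have : (powersetCard 3 (Icc 1 (2 * s + 1))).card = (2 * s + 1).choose 3 := by simp
    rw [← this]
    refine card_le_card (union_subset ?_ ?_)
    · intro e he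
      rw [mem_filter] at he
      obtain ⟨a, b, c, ha, hab, hbc, hc, rfl⟩ := hF.triple e he.1
      exact mem_powersetCard.2
        ⟨he.2, card_eq_three.2 ⟨a, b, c, by omega, by omega, by omega, rfl⟩⟩
    · intro e he
      obtain ⟨a, b, c, ha, hab, hbc, hc, -, rfl⟩ := mem_bad he
      refine mem_powersetCard.2
        ⟨?_, card_eq_three.2 ⟨a, b, c, by omega, by omega, by omega, rfl⟩⟩
      intro x; simp only [mem_insert, mem_singleton, mem_Icc]; omega
  · rw [disjoint_left]
    intro e he he'
    obtain ⟨a, b, c, ha, hab, hbc, hc, hsum, rfl⟩ := mem_bad he'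
    have := sum_lt_of_star hs hF hU hstar h12 ha hab hbc (mem_filter.1 he).1 hc
    omega

/-- All edges leaving `[2s + 1]` contain `1`, so they are counted by pairs `(b, c)`. -/
theorem card_outer {n s : ℕ} {F : Finset (Finset ℕ)} (hs : 3 ≤ s) (hF : Setup n F)
    (h23 : ({2, 3, 2 * s + 2} : Finset ℕ) ∉ F) (P : Finset (ℕ × ℕ))
    (hP : ∀ b c, 2 ≤ b → b < c → 2 * s + 2 ≤ c → c ≤ n → ({1, b, c} : Finset ℕ) ∈ F → (b, c) ∈ P) :
    (F.filter (¬ · ⊆ Icc 1 (2 * s + 1))).card ≤ P.card := by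
  refine le_trans (card_le_card (t := P.image fun p => {1, p.1, p.2}) ?_) card_image_le
  intro e he
  rw [mem_filter] at he
  obtain ⟨he, hout⟩ := he
  obtain ⟨a, b, c, ha, hab, hbc, hc, rfl⟩ := hF.triple e he
  have hc2 : 2 * s + 2 ≤ c := by
    by_contra! hlt
    apply hout
    intro x; simp only [mem_insert, mem_singleton, mem_Icc]; omega
  have ha1 : a = 1 := by
    by_contra! hne
    exact h23 (hF.down 2 3 (2 * s + 2) a b c (by omega) (by omega) (by omega) hab hbc (by omega)
      (by omega) hc2 he)
  subst ha1
  exact mem_image.2 ⟨(b, c), hP b c (by omega) hbc hc2 hc he, rfl⟩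

/-! ### The exceptional case -/

/-- The case `s = 3`, `n = 9`, where `(s - 1)³ = 8` is less than the `13` conceivable edges that
leave `[7]`; here `U(3, 7)` is used once more. -/
theorem card_le_nine {F : Finset (Finset ℕ)} (hF : Setup 9 F) (hU : HasU F 3 7)
    (h23 : ({2, 3, 8} : Finset ℕ) ∉ F) (h129 : ({1, 2, 9} : Finset ℕ) ∈ F)
    (hin : (F.filter (· ⊆ Icc 1 7)).card + 8 ≤ 35) : F.card ≤ 35 := by
  have hsplit := card_filter_add_card_filter_not (s := F) (· ⊆ Icc 1 7)
  have hout := card_outer (s := 3) (n := 9) (F := F) (by norm_num) hF h23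
  -- Three edges of `F` never cover eight vertices.
  have hno : ∀ e₁ ∈ F, ∀ e₂ ∈ F, ∀ e₃ ∈ F, (e₁ ∪ e₂ ∪ e₃).card ≤ 7 := by
    intro e₁ h₁ e₂ h₂ e₃ h₃
    have h := hU ![e₁, e₂, e₃] (by intro i; fin_cases i <;> assumption)
    refine le_trans (card_le_card ?_) h
    intro x hx
    rw [mem_union, mem_union] at hx
    rw [mem_biUnion]
    rcases hx with (hx | hx) | hx
    · exact ⟨0, mem_univ _, hx⟩
    · exact ⟨1, mem_univ _, hx⟩
    · exact ⟨2, mem_univ _, hx⟩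
  by_cases h168 : ({1, 6, 8} : Finset ℕ) ∈ F
  · -- No edge inside `[3, 7]` survives, which leaves at most `35 - 10` edges inside `[7]`.
    have h345 : ({3, 4, 5} : Finset ℕ) ∉ F := fun h =>
      absurd (hno _ h168 _ h129 _ h) (by decide)
    have hin' : (F.filter (· ⊆ Icc 1 7)).card ≤ 25 := by
      have : F.filter (· ⊆ Icc 1 7) ⊆ powersetCard 3 (Icc 1 7) \ powersetCard 3 (Icc 3 7) := by
        intro e he
        rw [mem_filter] at he
        obtain ⟨a, b, c, ha, hab, hbc, hc, rfl⟩ := hF.triple e he.1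
        refine mem_sdiff.2 ⟨mem_powersetCard.2
          ⟨he.2, card_eq_three.2 ⟨a, b, c, by omega, by omega, by omega, rfl⟩⟩, fun h => ?_⟩
        have ha3 := (mem_powersetCard.1 h).1 (show a ∈ _ by simp)
        rw [mem_Icc] at ha3
        exact h345 (hF.down 3 4 5 a b c (by omega) (by omega) (by omega) hab hbc ha3.1
          (by omega) (by omega) he.1)
      refine (card_le_card this).trans ?_
      rw [card_sdiff_of_subset (powersetCard_mono (Icc_subset_Icc_left (by norm_num)))]
      simp [Nat.choose]
    by_cases h169 : ({1, 6, 9} : Finset ℕ) ∈ F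
    · by_cases h178 : ({1, 7, 8} : Finset ℕ) ∈ F
      · -- Now every edge contains `1`.
        have h234 : ({2, 3, 4} : Finset ℕ) ∉ F := fun h =>
          absurd (hno _ h169 _ h178 _ h) (by decide)
        have hsub : F ⊆ (powersetCard 2 (Icc 2 9)).image (insert 1) := by
          intro e he
          obtain ⟨a, b, c, ha, hab, hbc, hc, rfl⟩ := hF.triple e he
          have ha1 : a = 1 := by
            by_contra! hne
            exact h234 (hF.down 2 3 4 a b c (by omega) (by omega) (by omega) hab hbc (by omega)
              (by omega) (by omega) he)
          subst ha1
          refine mem_image.2 ⟨{b, c}, mem_powersetCard.2 ⟨?_, card_pair (by omega)⟩, rfl⟩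
          intro x; simp only [mem_insert, mem_singleton, mem_Icc]; omega
        have := (card_le_card hsub).trans card_image_le
        rw [card_powersetCard, Nat.card_Icc] at this
        exact this.trans (by decide)
      · have := hout (Icc 2 6 ×ˢ Icc 8 9) (by
          intro b c hb hbc hc hc9 h
          rw [mem_product, mem_Icc, mem_Icc]
          refine ⟨⟨hb, ?_⟩, hc, hc9⟩
          by_contra! hlt
          exact h178 (hF.down 1 7 8 1 b c (by omega) (by omega) (by omega) (by omega) hbc
            (by omega) (by omega) (by omega) h))
        simp at this hsplit
        omega
    · have := hout (Icc 2 7 ×ˢ {8} ∪ Icc 2 5 ×ˢ {9}) (by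
        intro b c hb hbc hc hc9 h
        simp only [mem_union, mem_product, mem_Icc, mem_singleton]
        by_contra! hlt
        exact h169 (hF.down 1 6 9 1 b c (by omega) (by omega) (by omega) (by omega) hbc
          (by omega) (by omega) (by omega) h))
      have := this.trans (card_union_le _ _)
      simp at this hsplit
      omega
  · have := hout (Icc 2 5 ×ˢ Icc 8 9) (by
      intro b c hb hbc hc hc9 h
      rw [mem_product, mem_Icc, mem_Icc]
      refine ⟨⟨hb, ?_⟩, hc, hc9⟩
      by_contra! hlt
      exact h168 (hF.down 1 6 8 1 b c (by omega) (by omega) (by omega) (by omega) hbc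
        (by omega) (by omega) (by omega) h))
    simp at this hsplit
    omega

/-! ### The bound on `|F|` -/

/-- Lemma 3.5: the case nu(shadow F) = s + 1. -/
theorem case_shadow_eq (n s : ℕ) (hs : 3 ≤ s) (hn : 2 * s + 2 ≤ n)
    (F : Finset (Finset ℕ))
    (hF : ∀ e ∈ F, e ⊆ Finset.Icc 1 n ∧ e.card = 3)
    (hst : IsStable n F)
    (hU : HasU F s (2 * s + 1))
    (hnus : matchNum (shadow2 F) = s + 1) :
    F.card ≤ max (Nat.choose (n - 1) 2)
      (max ((n - s - 1) * Nat.choose (s + 1) 2 + Nat.choose (s + 1) 3)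
        (Nat.choose (2 * s + 1) 3)) := by
  have hS := setup_of_stable hF hst
  obtain ⟨u, rfl⟩ : ∃ u, n = 2 * s + 2 + u := ⟨n - (2 * s + 2), by omega⟩
  -- Every value of `bnd` is dominated by the last two terms of the maximum.
  have hbnd : ∀ τ ≤ s - 2, (F.card : ℤ) ≤ bnd s u τ →
      F.card ≤ max (Nat.choose (2 * s + 2 + u - 1) 2)
        (max ((2 * s + 2 + u - s - 1) * Nat.choose (s + 1) 2 + Nat.choose (s + 1) 3)
          (Nat.choose (2 * s + 1) 3)) := by
    intro τ hτ h
    have := bnd_le s u τ hs hτ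
    rw [bnd_last s u hs, le_max_iff] at this
    rw [le_max_iff, le_max_iff]
    right
    omega
  by_cases hstar : ∀ t, 3 ≤ t → t ≤ s + 1 → ({1, t + 1, 2 * s + 4 - t} : Finset ℕ) ∈ F
  swap
  · push Not at hstar
    obtain ⟨t, ht3, ht, hmiss⟩ := hstar
    have h := card_le_of_missing hS (by omega) ht hmiss
    refine hbnd (t - 3) (by omega) ?_
    unfold bnd
    rw [show 2 * s + 3 - t = 2 * s - (t - 3) by omega,
      show 2 * s + 2 + u + 1 - (2 * s + 4 - t) = u + 2 + (t - 3) by omega] at h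
    rw [show t - 3 + 3 = t by omega]
    exact_mod_cast h
  have hstar' : HasStar s F := by
    intro i hi1 hi2
    have := hstar (i - 1) (by omega) (by omega)
    rwa [show i - 1 + 1 = i by omega, show 2 * s + 4 - (i - 1) = 2 * s + 5 - i by omega] at this
  have h23 := not_mem_of_star hs hU hstar'
  have hsplit := card_filter_add_card_filter_not (s := F) (· ⊆ Icc 1 (2 * s + 1))
  have hout := card_outer hs hS h23
  by_cases h12 : ({1, 2, 2 * s + 2} : Finset ℕ) ∈ F
  swap
  · -- All edges lie in `[2s + 1]`.
    have hsub : F ⊆ powersetCard 3 (Icc 1 (2 * s + 1)) := by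
      intro e he
      obtain ⟨a, b, c, ha, hab, hbc, hc, rfl⟩ := hS.triple e he
      have hc2 : c ≤ 2 * s + 1 := by
        by_contra! hlt
        exact h12 (hS.down 1 2 (2 * s + 2) a b c (by omega) (by omega) (by omega) hab hbc ha
          (by omega) (by omega) he)
      refine mem_powersetCard.2 ⟨?_, card_eq_three.2 ⟨a, b, c, by omega, by omega, by omega, rfl⟩⟩
      intro x; simp only [mem_insert, mem_singleton, mem_Icc]; omega
    have := card_le_card hsub
    rw [card_powersetCard, Nat.card_Icc, Nat.add_sub_cancel] at this
    exact this.trans ((le_max_right _ _).trans (le_max_right _ _))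
  have hin := card_inner hs hS hU hstar' h12
  obtain ⟨p, rfl⟩ : ∃ p, s = p + 3 := ⟨s - 3, by omega⟩
  rw [show p + 3 - 1 = p + 2 by omega] at hin
  by_cases h13 : ({1, 3, 2 * (p + 3) + 2} : Finset ℕ) ∈ F
  swap
  · -- The edges leaving `[2s + 1]` are among the `u + 1` edges `{1, 2, c}`.
    have h := hout ({2} ×ˢ Icc (2 * (p + 3) + 2) (2 * (p + 3) + 2 + u)) (by
      intro b c hb hbc hc hcn h
      rw [mem_product, mem_Icc, mem_singleton]
      refine ⟨?_, hc, hcn⟩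
      by_contra! hne
      exact h13 (hS.down 1 3 (2 * (p + 3) + 2) 1 b c (by omega) (by omega) (by omega) (by omega)
        hbc (by omega) (by omega) hc h))
    rw [card_product, card_singleton, Nat.card_Icc] at h
    by_cases hu : u + 1 ≤ (p + 2) ^ 3
    · refine le_trans ?_ ((le_max_right _ _).trans (le_max_right _ _))
      omega
    · refine hbnd 0 (by omega) ?_
      have hF' : (F.card : ℤ) + (p + 2) ^ 3 ≤ ((2 * (p + 3) + 1).choose 3 : ℕ) + (u + 1) := by
        have h' : F.card + (p + 2) ^ 3 ≤ (2 * (p + 3) + 1).choose 3 + (u + 1) := by omega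
        exact_mod_cast h'
      rw [choose_three_cast, choose_two_even] at hF'
      have h32 : (Nat.choose 3 2 : ℤ) = 3 := by decide
      unfold bnd
      rw [Nat.sub_zero, Nat.zero_add, h32]
      push Not at hu
      zify at hu
      push_cast at hF' ⊢
      have hp : (0 : ℤ) ≤ p := by positivity
      nlinarith [pow_nonneg hp 2, pow_nonneg hp 3]
  by_cases h14 : ({1, 2, 2 * (p + 3) + 3} : Finset ℕ) ∈ F
  swap
  · -- All edges lie in `[2s + 2]`.
    have h := hout (Icc 2 (2 * (p + 3) + 1) ×ˢ {2 * (p + 3) + 2}) (by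
      intro b c hb hbc hc hcn h
      have hc' : c = 2 * (p + 3) + 2 := by
        by_contra! hne
        exact h14 (hS.down 1 2 (2 * (p + 3) + 3) 1 b c (by omega) (by omega) (by omega) (by omega)
          hbc (by omega) (by omega) (by omega) h)
      rw [mem_product, mem_Icc, mem_singleton]
      exact ⟨⟨hb, by dsimp only; omega⟩, hc'⟩)
    rw [card_product, card_singleton, Nat.card_Icc] at h
    refine le_trans ?_ ((le_max_right _ _).trans (le_max_right _ _))
    have hcube : 2 * (p + 3) ≤ (p + 2) ^ 3 := by nlinarith [Nat.zero_le (p ^ 3), Nat.zero_le (p ^ 2)]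
    omega
  -- Only `t = 0` is left as the missing pair, so all edges lie in `[2s + 3]`.
  have h15 : ({1, 2, 2 * (p + 3) + 4} : Finset ℕ) ∉ F := by
    rcases exists_missing hnus with h | ⟨t, ht1, ht, h⟩
    · exact h
    · exfalso
      rcases Nat.lt_or_ge t 3 with ht3 | ht3
      · interval_cases t
        · exact h h14
        · exact h h13
      · exact h (hstar t ht3 ht)
  have hu : 1 ≤ u := by
    have := (mem_Icc.1 ((hF _ h14).1 (show 2 * (p + 3) + 3 ∈ _ by simp))).2
    omega
  have h := hout (Icc 2 (2 * (p + 3) + 1) ×ˢ {2 * (p + 3) + 2} ∪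
      Icc 2 (2 * (p + 3) + 2) ×ˢ {2 * (p + 3) + 3}) (by
    intro b c hb hbc hc hcn h
    have hc' : c ≤ 2 * (p + 3) + 3 := by
      by_contra! hne
      exact h15 (hS.down 1 2 (2 * (p + 3) + 4) 1 b c (by omega) (by omega) (by omega) (by omega)
        hbc (by omega) (by omega) (by omega) h)
    simp only [mem_union, mem_product, mem_Icc, mem_singleton]
    omega)
  have h := h.trans (card_union_le _ _)
  rw [card_product, card_product, card_singleton, card_singleton, Nat.card_Icc, Nat.card_Icc] at h
  rcases Nat.eq_zero_or_pos p with rfl | hp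
  · have h73 : Nat.choose 7 3 = 35 := by decide
    norm_num [h73] at hin h hsplit
    rcases Nat.eq_or_lt_of_le hu with rfl | hu2
    · refine le_trans ?_ ((le_max_right _ _).trans (le_max_right _ _))
      exact card_le_nine hS hU h23 h14 (by omega)
    · refine le_trans ?_ ((le_max_left _ _).trans (le_max_right _ _))
      have h42 : Nat.choose 4 2 = 6 := by decide
      have h43 : Nat.choose 4 3 = 4 := by decide
      norm_num [h42, h43]
      omega
  · refine le_trans ?_ ((le_max_right _ _).trans (le_max_right _ _))
    have hcube : 4 * (p + 3) + 1 ≤ (p + 2) ^ 3 := by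
      obtain ⟨q, rfl⟩ : ∃ q, p = q + 1 := ⟨p - 1, by omega⟩
      nlinarith [Nat.zero_le (q ^ 3), Nat.zero_le (q ^ 2)]
    omega
end

section
/- Let n and s be integers with s ≥ 3 and n ≥ 2s + 4, and let F be a stable 3-graph with vertex set [n] that has property U(s, 2s+1), ν(F) ≥ 2, and ν(∂F) ≥ s + 2. Then {2, 3, 2s+2} is not an edge of F. -/
/-!
Stability and `ν(∂F) ≥ s + 2` force `{1, i, 2s+5-i} ∈ F` for `4 ≤ i ≤ s + 2` (`edge_of_matching`).
Otherwise every pair `{a < b}` of the shadow has `a < i` or `b < 2s+5-i`: an edge through `{a, b}`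
with `a ≥ i` and `b ≥ 2s+5-i` would dominate `{1, i, 2s+5-i}`. Give a vertex `v` the weight
`[v < i] + [v < 2s+5-i]`; each pair of the shadow then has weight at least 2, while the total weight
is `(i - 1) + (2s + 4 - i) = 2s + 3`, so a matching in the shadow has at most `s + 1` pairs.

If `{2, 3, 2s+2}` were also an edge, then together with the `s - 1` edges above it would cover all
of `{1, …, 2s+2}`, contradicting `U(s, 2s+1)`.
-/

open Finset

theorem card_triple {a b c : ℕ} (hab : a < b) (hbc : b < c) :
    ({a, b, c} : Finset ℕ).card = 3 := by
  rw [← Finset.length_sort (· ≤ ·), sort_triple hab hbc]; rfl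

theorem stable_triple {n : ℕ} {F : Finset (Finset ℕ)} (hst : IsStable n F)
    (hF : ∀ e ∈ F, e ⊆ Finset.Icc 1 n ∧ e.card = 3) {a b c x y z : ℕ}
    (hx : 1 ≤ x) (hxy : x < y) (hyz : y < z) (hab : a < b) (hbc : b < c)
    (hxa : x ≤ a) (hyb : y ≤ b) (hzc : z ≤ c) (h : ({a, b, c} : Finset ℕ) ∈ F) :
    ({x, y, z} : Finset ℕ) ∈ F := by
  have hc : c ∈ Finset.Icc 1 n := (hF _ h).1 (by simp)
  rw [Finset.mem_Icc] at hc
  refine hst _ _ ?_ h ⟨?_, ?_⟩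
  · intro v hv
    simp only [Finset.mem_insert, Finset.mem_singleton] at hv
    rw [Finset.mem_Icc]; omega
  · rw [card_triple hab hbc, card_triple hxy hyz]
  · intro k hk
    rw [card_triple hxy hyz] at hk
    rw [sort_triple hab hbc, sort_triple hxy hyz]
    interval_cases k <;> simpa

/-- An edge of `F` containing `{a, b}` dominates `{1, i, j}` when `a ≥ i` and `b ≥ j`, wherever its
third vertex lies. -/
theorem edge_of_shadow {n : ℕ} {F : Finset (Finset ℕ)} (hst : IsStable n F)
    (hF : ∀ e ∈ F, e ⊆ Finset.Icc 1 n ∧ e.card = 3) {a b i j : ℕ} (hi : 1 < i) (hij : i < j)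
    (hab : a < b) (hia : i ≤ a) (hjb : j ≤ b) (h : ({a, b} : Finset ℕ) ∈ shadow2 F) :
    ({1, i, j} : Finset ℕ) ∈ F := by
  simp only [shadow2, Finset.mem_biUnion, Finset.mem_powersetCard] at h
  obtain ⟨f, hf, hsub, -⟩ := h
  have hcard : (f \ {a, b}).card = 1 := by
    rw [Finset.card_sdiff_of_subset hsub, (hF f hf).2, Finset.card_pair hab.ne]
  obtain ⟨x, hx⟩ := Finset.card_eq_one.mp hcard
  have hxm : x ∈ f \ {a, b} := by rw [hx]; simp
  have hfe : f = {a, b, x} := by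
    rw [← Finset.sdiff_union_of_subset hsub, hx]; ext; simp; tauto
  simp only [Finset.mem_sdiff, Finset.mem_insert, Finset.mem_singleton, not_or] at hxm
  have hx1 := Finset.mem_Icc.mp ((hF f hf).1 hxm.1)
  rcases lt_trichotomy x a with hxa | hxa | hxa
  · have e : f = {x, a, b} := by rw [hfe]; ext; simp; tauto
    exact stable_triple hst hF le_rfl hi hij hxa hab (by omega) hia hjb (e ▸ hf)
  · exact absurd hxa hxm.2.1
  · rcases lt_trichotomy x b with hxb | hxb | hxb
    · have e : f = {a, x, b} := by rw [hfe]; ext; simp; tauto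
      exact stable_triple hst hF le_rfl hi hij hxa hxb (by omega) (by omega) hjb (e ▸ hf)
    · exact absurd hxb hxm.2.2
    · exact stable_triple hst hF le_rfl hi hij hab hxb (by omega) (by omega) (by omega) (hfe ▸ hf)

theorem exists_matching (G : Finset (Finset ℕ)) :
    ∃ M ⊆ G, (∀ a ∈ M, ∀ b ∈ M, a ≠ b → Disjoint a b) ∧ M.card = matchNum G := by
  have hne : (G.powerset.filter fun M => ∀ a ∈ M, ∀ b ∈ M, a ≠ b → Disjoint a b).Nonempty :=
    ⟨∅, by simp⟩
  obtain ⟨M, hM, h⟩ := Finset.exists_mem_eq_sup _ hne Finset.card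
  rw [Finset.mem_filter, Finset.mem_powerset] at hM
  exact ⟨M, hM.1, hM.2, h.symm⟩

/-- The weight count bounding a matching all of whose pairs `{a < b}` have `a < i` or `b < j`. -/
theorem two_mul_card_le {M : Finset (Finset ℕ)} {i j : ℕ}
    (hdisj : ∀ a ∈ M, ∀ b ∈ M, a ≠ b → Disjoint a b) (hij : i < j)
    (hM : ∀ e ∈ M, ∃ a b, 1 ≤ a ∧ a < b ∧ e = {a, b} ∧ (a < i ∨ b < j)) :
    2 * M.card ≤ (i - 1) + (j - 1) := by
  let w : ℕ → ℕ := fun v => (if v < i then 1 else 0) + (if v < j then 1 else 0)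
  have h1 : 2 * M.card ≤ ∑ e ∈ M, ∑ v ∈ e, w v := by
    rw [mul_comm, ← smul_eq_mul]
    refine Finset.card_nsmul_le_sum _ _ _ fun e he => ?_
    obtain ⟨a, b, -, hab, rfl, h⟩ := hM e he
    rw [Finset.sum_pair hab.ne]
    simp only [w]
    split_ifs <;> omega
  have h2 : ∑ e ∈ M, ∑ v ∈ e, w v = ∑ v ∈ M.biUnion id, w v :=
    (Finset.sum_biUnion fun a ha b hb hab => hdisj a ha b hb hab).symm
  have h3 : ∀ k, ∑ v ∈ M.biUnion id, (if v < k then 1 else 0) ≤ k - 1 := by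
    intro k
    rw [← Finset.card_filter, ← Nat.card_Ico]
    refine Finset.card_le_card fun v hv => ?_
    simp only [Finset.mem_filter, Finset.mem_biUnion, id] at hv
    obtain ⟨⟨e, he, hve⟩, hvk⟩ := hv
    obtain ⟨a, b, ha, hab, rfl, -⟩ := hM e he
    simp only [Finset.mem_insert, Finset.mem_singleton] at hve
    rw [Finset.mem_Ico]; omega
  have h4 : ∑ v ∈ M.biUnion id, w v ≤ (i - 1) + (j - 1) := by
    simp only [w, Finset.sum_add_distrib]
    exact Nat.add_le_add (h3 i) (h3 j)
  omega

theorem edge_of_matching {n m : ℕ} {F : Finset (Finset ℕ)} (hst : IsStable n F)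
    (hF : ∀ e ∈ F, e ⊆ Finset.Icc 1 n ∧ e.card = 3) (hm : m ≤ matchNum (shadow2 F)) {i j : ℕ}
    (hi : 1 < i) (hij : i < j) (hsum : i + j = 2 * m + 1) : ({1, i, j} : Finset ℕ) ∈ F := by
  by_contra hcon
  obtain ⟨M, hMG, hdisj, hcard⟩ := exists_matching (shadow2 F)
  have key := two_mul_card_le (i := i) (j := j) hdisj hij (by
    intro e he
    have heS := hMG he
    have h := heS
    simp only [shadow2, Finset.mem_biUnion, Finset.mem_powersetCard] at h
    obtain ⟨f, hf, hsub, hc⟩ := h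
    obtain ⟨x, y, hxy, rfl⟩ := Finset.card_eq_two.mp hc
    have hx := Finset.mem_Icc.mp ((hF f hf).1 (hsub (by simp : x ∈ ({x, y} : Finset ℕ))))
    have hy := Finset.mem_Icc.mp ((hF f hf).1 (hsub (by simp : y ∈ ({x, y} : Finset ℕ))))
    rcases lt_or_gt_of_ne hxy with hlt | hlt
    · refine ⟨x, y, hx.1, hlt, rfl, ?_⟩
      by_contra! hge
      exact hcon (edge_of_shadow hst hF hi hij hlt hge.1 hge.2 heS)
    · refine ⟨y, x, hy.1, hlt, Finset.pair_comm x y, ?_⟩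
      by_contra! hge
      exact hcon (edge_of_shadow hst hF hi hij hlt hge.1 hge.2 (Finset.pair_comm x y ▸ heS)))
  omega

/-- Claim 3 of Lemma 3.2: {2, 3, 2s+2} is not an edge of F. -/
theorem no_edge_2_3 (n s : ℕ) (hs : 3 ≤ s) (hn : 2 * s + 4 ≤ n)
    (F : Finset (Finset ℕ))
    (hF : ∀ e ∈ F, e ⊆ Finset.Icc 1 n ∧ e.card = 3)
    (hst : IsStable n F)
    (hU : HasU F s (2 * s + 1))
    (hnu : 2 ≤ matchNum F)
    (hnus : s + 2 ≤ matchNum (shadow2 F)) :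
    ({2, 3, 2 * s + 2} : Finset ℕ) ∉ F := by
  intro hmem
  let f : Fin s → Finset ℕ := fun k =>
    if k.val = 0 then {2, 3, 2 * s + 2} else {1, k.val + 3, 2 * s + 2 - k.val}
  have hf : ∀ k, f k ∈ F := by
    intro k
    have hk := k.isLt
    by_cases h0 : k.val = 0
    · simpa only [f, if_pos h0] using hmem
    · simp only [f, if_neg h0]
      exact edge_of_matching hst hF hnus (by omega) (by omega) (by omega)
  have hcover : Finset.Icc 1 (2 * s + 2) ⊆ Finset.univ.biUnion f := by
    intro v hv
    rw [Finset.mem_Icc] at hv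
    have hk : ∃ k, ∃ hk : k < s, v ∈ f ⟨k, hk⟩ := by
      by_cases h0 : v = 2 ∨ v = 3 ∨ v = 2 * s + 2
      · exact ⟨0, by omega, by simpa [f] using h0⟩
      by_cases h1 : v = 1
      · exact ⟨1, by omega, by simp [f, h1]⟩
      by_cases h2 : v ≤ s + 2
      · refine ⟨v - 3, by omega, ?_⟩
        simp only [f, if_neg (show ¬ v - 3 = 0 by omega), Finset.mem_insert, Finset.mem_singleton]
        omega
      · refine ⟨2 * s + 2 - v, by omega, ?_⟩
        simp only [f, if_neg (show ¬ 2 * s + 2 - v = 0 by omega), Finset.mem_insert,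
          Finset.mem_singleton]
        omega
    obtain ⟨k, hk, hvk⟩ := hk
    exact Finset.mem_biUnion.mpr ⟨⟨k, hk⟩, Finset.mem_univ _, hvk⟩
  have h1 := Finset.card_le_card hcover
  have h2 := hU f hf
  rw [Nat.card_Icc] at h1
  omega
end
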